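/- There exists a constant C(d) depending only on d such that for every p ≥ 1, E sup{ Σ_{i∈[n]^d×[m]} a_i g_{i_1} (∏_{k=2}^d x^k_{i_k}) t_{i_{d+1}} : (x^2,...,x^d,t) ∈ (B_2^n)^{d−1} × T } ≤ C(d) Σ_{k=0}^d p^{(k+1−d)/2} s_k(A), where (g_i)_{i≤n} are i.i.d. standard Gaussian. -/

import Mathlib

/-!
The proof replaces chaining over `(B_2^n)^d × T` (the chaos having order `d + 1`) by a
Gaussian smoothing of the `d` unit blocks `x^k` combined with an entropy inequality.

Put `s = p^{-1/2}` and, for fixed unit blocks `x`, replace `x` by `x + s • y` with `y` a standard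
Gaussian. The process is multilinear in the blocks, which are perturbed independently, so its
value at `x` is the `y`-mean of its value at `x + s • y` (`integral_uvec_shift`). By the
Cameron–Martin formula, the mean of a function of `y` under the shift by `x / s` is at most the
logarithm of its exponential moment plus the relative entropy, which is at most `d p / 2`
(`shift_integral_le`). This bounds the supremum over all `x` at once by a single exponential moment
in `y`. The supremum over `t ∈ T`, penalised by the variance of the process, has an exponential
moment controlled by the exponential of the mean supremum: this is the Wills functional inequality
`wills`, proved by discretising the rotation path between two independent Gaussian vectors.
Together these give `smoothing_bound`: for every `r > 0`, the expected supremum is at most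
`2 r Q + H + d p / (2 r)`, where `H` and `Q` bound the `y`-average of the mean supremum over `t`
and the `y`-average of the variance, uniformly in `x`.

Both averages are computed by expanding the product of the `x^k + s y^k` over the set `I` of
blocks at which `y^k` is chosen (`uvec_expand`). The mean supremum of the `I`-th term is dominated
by the mixed norm with deterministic singletons outside `I` and Gaussian singletons at `I` and the
first coordinate (`integral_penSup_mix_le`). The variance of the `I`-th term is the squared
Hilbert–Schmidt norm in the coordinates `I ∪ {0}`, dominated by the square of the purely
deterministic norm with the single block `I ∪ {0}` and singletons elsewhere
(`sqrt_sum_sq_le_chaos`). With `S` the right-hand sum, this yields `H ≤ 2^d S` and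
`Q ≤ 4^d S² / p`, and the choice `r ≈ p / S` finishes the proof.
-/

open MeasureTheory ProbabilityTheory
open scoped Classical

noncomputable section

/-- product of i.i.d. standard Gaussians indexed by `ι`. -/
def stdGaussian (ι : Type*) [Fintype ι] : Measure (ι → ℝ) :=
  Measure.pi fun _ => gaussianReal 0 1

/-- Index type for block Gaussians. -/
abbrev GIdx (d n : ℕ) := Σ J : Finset (Fin d), ({l // l ∈ J} → Fin n)

def IsPartition {d : ℕ} (J : Finset (Fin d)) (P : Finset (Finset (Fin d))) : Prop :=
  (∀ I ∈ P, I.Nonempty) ∧ (∀ I ∈ P, ∀ I' ∈ P, I ≠ I' → Disjoint I I') ∧ P.sup id = J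

def IsPartitionPair {d : ℕ} (S : Finset (Fin d)) (P P' : Finset (Finset (Fin d))) : Prop :=
  Disjoint P P' ∧ IsPartition S (P ∪ P')

/-- nonzero coordinates of `Fin (d+1)`: the coordinates `2,…,d` of the paper. -/
abbrev PIdx (d : ℕ) : Type := {k : Fin (d + 1) // k ≠ 0}

/-- a point of `(ℝ^n)^{d-1} × ℝ^m`. -/
abbrev Pt (n m d : ℕ) : Type := (PIdx d → Fin n → ℝ) × (Fin m → ℝ)

/-- assembling a full multi-index out of its first coordinate and the rest. -/
def ext0 {n d : ℕ} (i1 : Fin n) (i' : PIdx d → Fin n) : Fin (d + 1) → Fin n :=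
  fun k => if h : k = 0 then i1 else i' ⟨k, h⟩

/-- `‖A‖_{P'∣P}` for an array with values indexed by `Fin m`, relative to `T ⊆ ℝ^m`. -/
def chaosNormT {n m d : ℕ} (A : (Fin (d + 1) → Fin n) → Fin m → ℝ)
    (T : Set (Fin m → ℝ)) (P' P : Finset (Finset (Fin (d + 1)))) : ℝ :=
  sSup { r : ℝ | ∃ x : (I : Finset (Fin (d + 1))) → ({l // l ∈ I} → Fin n) → ℝ,
    (∀ I ∈ P, ∑ v : {l // l ∈ I} → Fin n, x I v ^ 2 ≤ 1) ∧
    r = ∫ ω : GIdx (d + 1) n → ℝ,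
        sSup { s : ℝ | ∃ t ∈ T, s = ∑ i : Fin (d + 1) → Fin n, ∑ j : Fin m,
          (∏ I ∈ P, x I fun l => i l.1) * (∏ J ∈ P', ω ⟨J, fun l => i l.1⟩) *
            A i j * t j }
        ∂ stdGaussian (GIdx (d + 1) n) }

/-- `s_k(A)`. -/
def sNorm {n m d : ℕ} (A : (Fin (d + 1) → Fin n) → Fin m → ℝ)
    (T : Set (Fin m → ℝ)) (k : ℕ) : ℝ :=
  ∑ PP ∈ Finset.univ.filter (fun PP :
      Finset (Finset (Fin (d + 1))) × Finset (Finset (Fin (d + 1))) =>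
      IsPartitionPair Finset.univ PP.1 PP.2 ∧ PP.1.card = k),
    chaosNormT A T PP.2 PP.1

/-- the pseudometric `ρ_A`. -/
def rhoA {n m d : ℕ} (A : (Fin (d + 1) → Fin n) → Fin m → ℝ) (z w : Pt n m d) : ℝ :=
  Real.sqrt (∑ i1 : Fin n,
    (∑ i' : PIdx d → Fin n, ∑ j : Fin m, A (ext0 i1 i') j *
      ((∏ k, w.1 k (i' k)) * w.2 j - (∏ k, z.1 k (i' k)) * z.2 j)) ^ 2)

/-- `N(S, ρ, ε)`: the minimal number of closed balls of diameter `ε` (radius `ε/2`)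
covering `S`. -/
def covNum {β : Type*} (S : Set β) (ρ : β → β → ℝ) (ε : ℝ) : ℝ :=
  sInf { N : ℝ | ∃ c : Finset β, (c.card : ℝ) = N ∧
    S ⊆ ⋃ x ∈ c, { y | ρ x y ≤ ε / 2 } }

/-- `F_A(U)`. -/
def FA {n m d : ℕ} (A : (Fin (d + 1) → Fin n) → Fin m → ℝ) (U : Set (Pt n m d)) : ℝ :=
  ∫ ω : Fin n → ℝ, sSup { s : ℝ | ∃ z ∈ U,
      s = ∑ i : Fin (d + 1) → Fin n, ∑ j : Fin m,
        ω (i 0) * (∏ k : PIdx d, z.1 k (i k.1)) * A i j * z.2 j }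
    ∂ stdGaussian (Fin n)

/-- `Δ_A(U)`, the diameter of `U` with respect to `ρ_A`. -/
def DeltaA {n m d : ℕ} (A : (Fin (d + 1) → Fin n) → Fin m → ℝ)
    (U : Set (Pt n m d)) : ℝ :=
  sSup { r : ℝ | ∃ z ∈ U, ∃ w ∈ U, r = rhoA A z w }

/-- `(B_2^n)^{d-1} × T`. -/
def ballSet (n m d : ℕ) (T : Set (Fin m → ℝ)) : Set (Pt n m d) :=
  { z | (∀ k, ∑ j, z.1 k j ^ 2 ≤ 1) ∧ z.2 ∈ T }

/-- `W^U_I(α_A)`. -/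
def WUI {n m d : ℕ} (A : (Fin (d + 1) → Fin n) → Fin m → ℝ)
    (U : Set (Pt n m d)) (I : Finset (PIdx d)) : ℝ :=
  sSup { r : ℝ | ∃ z ∈ U, r = ∫ ω : PIdx d × Fin n → ℝ,
    Real.sqrt (∑ i1 : Fin n, (∑ i' : PIdx d → Fin n, ∑ j : Fin m,
      A (ext0 i1 i') j *
        (∏ k : PIdx d, if k ∈ I then ω (k, i' k) else z.1 k (i' k)) * z.2 j) ^ 2)
    ∂ stdGaussian (PIdx d × Fin n) }

/-- `V^U_I(β_A)`. -/
def VUI {n m d : ℕ} (A : (Fin (d + 1) → Fin n) → Fin m → ℝ)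
    (T : Set (Fin m → ℝ)) (U : Set (Pt n m d)) (I : Finset (PIdx d)) : ℝ :=
  sSup { r : ℝ | ∃ z ∈ U, r = ∫ ω : PIdx d × Fin n → ℝ,
    (∫ g : Fin n → ℝ, sSup { s : ℝ | ∃ t' ∈ T,
        s = ∑ i1 : Fin n, ∑ i' : PIdx d → Fin n, ∑ j : Fin m,
          A (ext0 i1 i') j * g i1 *
            (∏ k : PIdx d, if k ∈ I then ω (k, i' k) else z.1 k (i' k)) * t' j }
      ∂ stdGaussian (Fin n))
    ∂ stdGaussian (PIdx d × Fin n) }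

/-- `W^U_d(α_A, s)`. -/
def Wd {n m d : ℕ} (A : (Fin (d + 1) → Fin n) → Fin m → ℝ)
    (U : Set (Pt n m d)) (s : ℝ) : ℝ :=
  ∑ k ∈ Finset.Icc 1 d, s ^ k *
    ∑ I ∈ Finset.univ.filter (fun I : Finset (PIdx d) => I.card = k), WUI A U I

/-- `V^U_d(β_A, s)`. -/
def Vd {n m d : ℕ} (A : (Fin (d + 1) → Fin n) → Fin m → ℝ)
    (T : Set (Fin m → ℝ)) (U : Set (Pt n m d)) (s : ℝ) : ℝ :=
  ∑ k ∈ Finset.range (d + 1), s ^ (k + 1) *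
    ∑ I ∈ Finset.univ.filter (fun I : Finset (PIdx d) => I.card = k), VUI A T U I

/-- `‖A ⋅_j x_j‖_{P'∣P}`: the norm of the contraction of `A` in coordinate `j0`
against the vector `xj`. -/
def chaosNormTFix {n m d : ℕ} (A : (Fin (d + 1) → Fin n) → Fin m → ℝ)
    (T : Set (Fin m → ℝ)) (P' P : Finset (Finset (Fin (d + 1))))
    (j0 : Fin (d + 1)) (xj : Fin n → ℝ) : ℝ :=
  sSup { r : ℝ | ∃ x : (I : Finset (Fin (d + 1))) → ({l // l ∈ I} → Fin n) → ℝ,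
    (∀ I ∈ P, ∑ v : {l // l ∈ I} → Fin n, x I v ^ 2 ≤ 1) ∧
    r = ∫ ω : GIdx (d + 1) n → ℝ,
        sSup { s : ℝ | ∃ t ∈ T, s = ∑ i : Fin (d + 1) → Fin n, ∑ j : Fin m,
          (∏ I ∈ P, x I fun l => i l.1) * xj (i j0) *
            (∏ J ∈ P', ω ⟨J, fun l => i l.1⟩) * A i j * t j }
        ∂ stdGaussian (GIdx (d + 1) n) }

/-- the norm `α̂_A`. -/
def hatAlpha {n m d : ℕ} (A : (Fin (d + 1) → Fin n) → Fin m → ℝ)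
    (T : Set (Fin m → ℝ)) (x : PIdx d → Fin n → ℝ) : ℝ :=
  ∑ j : PIdx d,
    ∑ PP ∈ Finset.univ.filter (fun PP :
        Finset (Finset (Fin (d + 1))) × Finset (Finset (Fin (d + 1))) =>
        IsPartitionPair (Finset.univ.erase j.1) PP.1 PP.2 ∧ PP.1.card = d - 1),
      chaosNormTFix A T PP.2 PP.1 j.1 (x j)

/-- `α̂_A(U)`. -/
def hatAlphaSup {n m d : ℕ} (A : (Fin (d + 1) → Fin n) → Fin m → ℝ)
    (T : Set (Fin m → ℝ)) (U : Set (Pt n m d)) : ℝ :=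
  sSup { r : ℝ | ∃ z ∈ U, r = hatAlpha A T z.1 }

end

/-! ### Finite-dimensional Gaussian measures -/

instance stdGaussian_isProb (ι : Type*) [Fintype ι] :
    IsProbabilityMeasure (_root_.stdGaussian ι) := by
  unfold _root_.stdGaussian; infer_instance

lemma integrable_exp_abs_gaussianReal (a : ℝ) :
    Integrable (fun x : ℝ => Real.exp (a * |x|)) (gaussianReal 0 1) := by
  have h1 := integrable_exp_mul_gaussianReal (μ := 0) (v := 1) a
  have h2 := integrable_exp_mul_gaussianReal (μ := 0) (v := 1) (-a)
  refine (h1.add h2).mono' (by fun_prop) (Filter.Eventually.of_forall fun x => ?_)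
  rw [Real.norm_of_nonneg (Real.exp_pos _).le]
  simp only [Pi.add_apply]
  rcases abs_cases x with ⟨h, _⟩ | ⟨h, _⟩ <;> rw [h]
  · linarith [Real.exp_pos (-a * x)]
  · rw [show a * -x = -a * x by ring]; linarith [Real.exp_pos (a * x)]

lemma integrable_exp_sum_abs (ι : Type*) [Fintype ι] (a : ℝ) :
    Integrable (fun y : ι → ℝ => Real.exp (a * ∑ c, |y c|)) (_root_.stdGaussian ι) := by
  have := Integrable.fintype_prod (ι := ι) (μ := fun _ => gaussianReal 0 1)
    (f := fun _ x => Real.exp (a * |x|)) (fun _ => integrable_exp_abs_gaussianReal a)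
  simpa [_root_.stdGaussian, Finset.mul_sum, Real.exp_sum] using this

/-- Measurable functions of at most exponential growth are integrable. -/
lemma integrable_of_exp_bound {ι : Type*} [Fintype ι] {F : (ι → ℝ) → ℝ} (hF : Measurable F)
    (B a : ℝ) (h : ∀ y, |F y| ≤ B * Real.exp (a * ∑ c, |y c|)) :
    Integrable F (_root_.stdGaussian ι) :=
  ((integrable_exp_sum_abs ι a).const_mul B).mono' hF.aestronglyMeasurable
    (Filter.Eventually.of_forall fun y => by simpa using h y)

/-- Cameron–Martin in dimension one. -/
lemma gaussianReal_shift (v : ℝ) :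
    ((gaussianReal 0 1).withDensity
      (fun y => ENNReal.ofReal (Real.exp (-(v * y) - v ^ 2 / 2)))).map (fun y => y + v)
      = gaussianReal 0 1 := by
  have h : (gaussianReal 0 1).withDensity
      (fun y => ENNReal.ofReal (Real.exp (-(v * y) - v ^ 2 / 2))) = gaussianReal (-v) 1 := by
    rw [gaussianReal_of_var_ne_zero _ one_ne_zero, gaussianReal_of_var_ne_zero _ one_ne_zero,
      ← withDensity_mul _ (by fun_prop) (by fun_prop)]
    congr 1
    ext y
    simp only [Pi.mul_apply, gaussianPDF]
    rw [← ENNReal.ofReal_mul (gaussianPDFReal_nonneg _ _ _)]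
    congr 1
    simp only [gaussianPDFReal]
    rw [mul_assoc, ← Real.exp_add]
    congr 2
    simp
    ring
  rw [h, gaussianReal_map_add_const]
  simp

/-- Cameron–Martin for the standard Gaussian measure. -/
lemma stdGaussian_shift {ι : Type*} [Fintype ι] (v : ι → ℝ) :
    ((_root_.stdGaussian ι).withDensity
      (fun y => ENNReal.ofReal (Real.exp (∑ c, (-(v c * y c) - v c ^ 2 / 2))))).map (fun y => y + v)
      = _root_.stdGaussian ι := by
  symm
  refine Measure.pi_eq fun s hs => ?_
  have hm : Measurable (fun y : ι → ℝ => y + v) := by fun_prop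
  rw [Measure.map_apply hm (MeasurableSet.univ_pi hs), withDensity_apply _
    (hm (MeasurableSet.univ_pi hs)), ← lintegral_indicator (hm (MeasurableSet.univ_pi hs))]
  let f : ι → ℝ → ℝ := fun c =>
    Set.indicator ((fun y => y + v c) ⁻¹' s c) (fun y => Real.exp (-(v c * y) - v c ^ 2 / 2))
  have hms : ∀ c, MeasurableSet ((fun y => y + v c) ⁻¹' s c) := fun c =>
    (by fun_prop : Measurable (fun y : ℝ => y + v c)) (hs c)
  have hfnn : ∀ c y, 0 ≤ f c y := fun c y => Set.indicator_nonneg (fun _ _ => (Real.exp_pos _).le) _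
  have hfi : ∀ c, Integrable (f c) (gaussianReal 0 1) := by
    intro c
    refine Integrable.indicator ?_ (hms c)
    have := (integrable_exp_mul_gaussianReal (μ := 0) (v := 1) (-v c)).mul_const
      (Real.exp (-(v c ^ 2 / 2)))
    refine this.congr (Filter.Eventually.of_forall fun y => ?_)
    simp only [← Real.exp_add]
    congr 1; ring
  have h1 : ∀ y : ι → ℝ, ((fun y => y + v) ⁻¹' Set.univ.pi s).indicator
      (fun y => ENNReal.ofReal (Real.exp (∑ c, (-(v c * y c) - v c ^ 2 / 2)))) y
      = ENNReal.ofReal (∏ c, f c (y c)) := by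
    intro y
    by_cases hy : y ∈ (fun y => y + v) ⁻¹' Set.univ.pi s
    · rw [Set.indicator_of_mem hy, Real.exp_sum]
      congr 1
      refine Finset.prod_congr rfl fun c _ => ?_
      simp only [f]
      rw [Set.indicator_of_mem]
      exact hy c (Set.mem_univ c)
    · rw [Set.indicator_of_notMem hy]
      simp only [Set.mem_preimage, Set.mem_pi, Set.mem_univ, true_implies, not_forall] at hy
      obtain ⟨c, hc⟩ := hy
      rw [Finset.prod_eq_zero (Finset.mem_univ c), ENNReal.ofReal_zero]
      have hc' : y c ∉ (fun y => y + v c) ⁻¹' s c := hc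
      simp only [f]
      rw [Set.indicator_of_notMem hc']
  simp_rw [h1]
  have hfi' : Integrable (fun y : ι → ℝ => ∏ c, f c (y c)) (_root_.stdGaussian ι) :=
    Integrable.fintype_prod hfi
  rw [← ofReal_integral_eq_lintegral_ofReal hfi'
    (Filter.Eventually.of_forall fun y => Finset.prod_nonneg fun c _ => hfnn c _)]
  unfold _root_.stdGaussian
  rw [integral_fintype_prod_eq_prod, ENNReal.ofReal_prod_of_nonneg
    (fun c _ => integral_nonneg (hfnn c))]
  refine Finset.prod_congr rfl fun c _ => ?_
  rw [ofReal_integral_eq_lintegral_ofReal (hfi c) (Filter.Eventually.of_forall (hfnn c))]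
  conv_rhs => rw [← gaussianReal_shift (v c)]
  have hm1 : Measurable (fun y : ℝ => y + v c) := by fun_prop
  rw [Measure.map_apply hm1 (hs c), withDensity_apply _ (hm1 (hs c)),
    ← lintegral_indicator (hm1 (hs c))]
  refine lintegral_congr fun y => ?_
  simp only [f, Set.indicator]
  split_ifs <;> simp

/-- The Laplace transform of the standard Gaussian measure. -/
lemma lintegral_exp_stdGaussian {ι : Type*} [Fintype ι] (v : ι → ℝ) :
    ∫⁻ y, ENNReal.ofReal (Real.exp (∑ c, v c * y c)) ∂(_root_.stdGaussian ι)
      = ENNReal.ofReal (Real.exp ((∑ c, v c ^ 2) / 2)) := by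
  have h := congrArg (fun μ : Measure (ι → ℝ) => μ Set.univ) (stdGaussian_shift (fun c => - v c))
  simp only [measure_univ] at h
  rw [Measure.map_apply (by fun_prop) MeasurableSet.univ, Set.preimage_univ,
    withDensity_apply _ MeasurableSet.univ, Measure.restrict_univ] at h
  have h2 : ∀ y : ι → ℝ, ENNReal.ofReal (Real.exp (∑ c, v c * y c))
      = ENNReal.ofReal (Real.exp ((∑ c, v c ^ 2) / 2)) *
        ENNReal.ofReal (Real.exp (∑ c, (-(-v c * y c) - (-v c) ^ 2 / 2))) := by
    intro y
    rw [← ENNReal.ofReal_mul (Real.exp_pos _).le, ← Real.exp_add]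
    congr 2
    rw [Finset.sum_div, ← Finset.sum_add_distrib]
    exact Finset.sum_congr rfl fun c _ => by ring
  simp_rw [h2]
  rw [lintegral_const_mul _ (by fun_prop), h, mul_one]

/-- A Donsker–Varadhan type inequality for a translate of the Gaussian measure; it follows from
Cameron–Martin and `z + 1 ≤ exp z`. -/
lemma shift_integral_le {ι : Type*} [Fintype ι] (v : ι → ℝ) {Ψ : (ι → ℝ) → ℝ} (hΨ : Measurable Ψ)
    (he : Integrable (fun y => Real.exp (Ψ y)) (_root_.stdGaussian ι))
    (hi : Integrable (fun y => Ψ (y + v)) (_root_.stdGaussian ι)) :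
    ∫ y, Ψ (y + v) ∂(_root_.stdGaussian ι)
      ≤ (∑ c, v c ^ 2) / 2 + ∫ y, Real.exp (Ψ y) ∂(_root_.stdGaussian ι) - 1 := by
  set γ := _root_.stdGaussian ι with hγ
  have hD : Measurable (fun y : ι → ℝ =>
      ENNReal.ofReal (Real.exp (∑ c, (-(v c * y c) - v c ^ 2 / 2)))) := by fun_prop
  have hshift : Measurable (fun y : ι → ℝ => y + v) := by fun_prop
  have key : Integrable (fun y => Real.exp (∑ c, (-(v c * y c) - v c ^ 2 / 2)) *
        Real.exp (Ψ (y + v))) γ ∧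
      ∫ y, Real.exp (∑ c, (-(v c * y c) - v c ^ 2 / 2)) * Real.exp (Ψ (y + v)) ∂γ
        = ∫ y, Real.exp (Ψ y) ∂γ := by
    have hmeas : Measurable (fun y => Real.exp (Ψ y)) := by fun_prop
    constructor
    · have he' := he
      rw [hγ, ← stdGaussian_shift v, integrable_map_measure (hmeas.aestronglyMeasurable)
        hshift.aemeasurable, integrable_withDensity_iff_integrable_smul' hD
        (Filter.Eventually.of_forall fun _ => ENNReal.ofReal_lt_top)] at he'
      refine he'.congr (Filter.Eventually.of_forall fun y => ?_)
      simp [ENNReal.toReal_ofReal (Real.exp_pos _).le]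
    · conv_rhs => rw [hγ, ← stdGaussian_shift v]
      rw [integral_map hshift.aemeasurable hmeas.aestronglyMeasurable,
        integral_withDensity_eq_integral_toReal_smul hD
        (Filter.Eventually.of_forall fun _ => ENNReal.ofReal_lt_top)]
      refine integral_congr_ae (Filter.Eventually.of_forall fun y => ?_)
      simp [ENNReal.toReal_ofReal (Real.exp_pos _).le]
  have hmean : ∀ c, Integrable (fun y : ι → ℝ => y c) γ ∧ ∫ y : ι → ℝ, y c ∂γ = 0 := by
    intro c
    have hmp : MeasurePreserving (fun y : ι → ℝ => y c) γ (gaussianReal 0 1) :=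
      measurePreserving_eval (fun _ => gaussianReal 0 1) c
    constructor
    · exact hmp.integrable_comp_of_integrable
        ((memLp_id_gaussianReal (μ := 0) (v := 1) 1).integrable (by simp))
    · have := integral_id_gaussianReal (μ := 0) (v := 1)
      rw [← hmp.map_eq, integral_map hmp.measurable.aemeasurable
        (by fun_prop)] at this
      exact this
  have hlin : Integrable (fun y : ι → ℝ => ∑ c, v c * y c) γ :=
    integrable_finsetSum _ fun c _ => (hmean c).1.const_mul _
  have hlin0 : ∫ y : ι → ℝ, ∑ c, v c * y c ∂γ = 0 := by
    rw [integral_finsetSum _ fun c _ => (hmean c).1.const_mul _]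
    simp [integral_const_mul, (hmean _).2]
  rw [← key.2]
  have h3 : ∫ y, ((Ψ (y + v) - ∑ c, v c * y c) + (1 - (∑ c, v c ^ 2) / 2)) ∂γ
      ≤ ∫ y, Real.exp (∑ c, (-(v c * y c) - v c ^ 2 / 2)) * Real.exp (Ψ (y + v)) ∂γ := by
    refine integral_mono ((hi.sub hlin).add (integrable_const _)) key.1 fun y => ?_
    simp only
    rw [← Real.exp_add]
    refine le_trans ?_ (Real.add_one_le_exp _)
    rw [Finset.sum_sub_distrib, Finset.sum_neg_distrib, Finset.sum_div]
    linarith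
  have hsub : Integrable (fun y => Ψ (y + v) - ∑ c, v c * y c) γ := hi.sub hlin
  rw [integral_add hsub (integrable_const _), integral_sub hi hlin, hlin0] at h3
  simp only [sub_zero, integral_const, probReal_univ, one_smul] at h3
  linarith

/-- Rotation invariance of a pair of independent standard Gaussian vectors. -/
lemma measurePreserving_rotation {ι : Type*} [Fintype ι] (θ : ℝ) :
    MeasurePreserving (fun q : (ι → ℝ) × (ι → ℝ) =>
        (Real.cos θ • q.1 + Real.sin θ • q.2, -Real.sin θ • q.1 + Real.cos θ • q.2))
      ((_root_.stdGaussian ι).prod (_root_.stdGaussian ι))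
      ((_root_.stdGaussian ι).prod (_root_.stdGaussian ι)) := by
  have h1 : MeasurePreserving (ContinuousLinearMap.rotation (E := ℝ) θ)
      ((gaussianReal 0 1).prod (gaussianReal 0 1)) ((gaussianReal 0 1).prod (gaussianReal 0 1)) :=
    ⟨by fun_prop, IsGaussian.map_rotation_eq_self (by simp) θ⟩
  have h2 := measurePreserving_pi (fun _ : ι => (gaussianReal 0 1).prod (gaussianReal 0 1))
    (fun _ : ι => (gaussianReal 0 1).prod (gaussianReal 0 1)) (fun _ => h1)
  have h3 := measurePreserving_arrowProdEquivProdArrow ℝ ℝ ι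
    (fun _ => gaussianReal 0 1) (fun _ => gaussianReal 0 1)
  have h4 := (h3.comp h2).comp h3.symm
  exact h4

/-! ### The Wills functional of a Gaussian process -/

/-- The supremum of the Gaussian process `t ↦ ⟨g, u t⟩` penalised by `κ` times its variance. -/
noncomputable def penSup {ι τ : Type*} [Fintype ι] (u : τ → ι → ℝ) (κ : ℝ) (g : ι → ℝ) : ℝ :=
  ⨆ t, (∑ c, g c * u t c - κ * ∑ c, u t c ^ 2)

section Wills

variable {ι τ : Type*} [Fintype ι] {u : τ → ι → ℝ} {B : ℝ}

lemma abs_inner_le (hB : ∀ t c, |u t c| ≤ B) (g : ι → ℝ) (t : τ) :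
    |∑ c, g c * u t c| ≤ B * ∑ c, |g c| := by
  rw [Finset.mul_sum]
  refine (Finset.abs_sum_le_sum_abs _ _).trans (Finset.sum_le_sum fun c _ => ?_)
  rw [abs_mul, mul_comm]
  exact mul_le_mul_of_nonneg_right (hB t c) (abs_nonneg _)

lemma sumSq_le (hB : ∀ t c, |u t c| ≤ B) (t : τ) :
    ∑ c, u t c ^ 2 ≤ Fintype.card ι * B ^ 2 := by
  have : ∀ c ∈ Finset.univ, u t c ^ 2 ≤ B ^ 2 := fun c _ => by
    rw [← sq_abs]; exact pow_le_pow_left₀ (abs_nonneg _) (hB t c) 2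
  simpa using Finset.sum_le_sum this

lemma abs_pen_term_le (hB : ∀ t c, |u t c| ≤ B) {κ : ℝ} (hκ : 0 ≤ κ) (g : ι → ℝ) (t : τ) :
    |∑ c, g c * u t c - κ * ∑ c, u t c ^ 2|
      ≤ B * ∑ c, |g c| + κ * (Fintype.card ι * B ^ 2) := by
  refine (abs_sub _ _).trans (add_le_add (abs_inner_le hB g t) ?_)
  rw [abs_mul, abs_of_nonneg hκ, abs_of_nonneg (Finset.sum_nonneg fun _ _ => sq_nonneg _)]
  exact mul_le_mul_of_nonneg_left (sumSq_le hB t) hκ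

lemma pen_bdd (hB : ∀ t c, |u t c| ≤ B) {κ : ℝ} (hκ : 0 ≤ κ) (g : ι → ℝ) :
    BddAbove (Set.range fun t => ∑ c, g c * u t c - κ * ∑ c, u t c ^ 2) :=
  ⟨_, by rintro _ ⟨t, rfl⟩; exact (le_abs_self _).trans (abs_pen_term_le hB hκ g t)⟩

lemma abs_ciSup_le {τ : Type*} [Nonempty τ] {f : τ → ℝ} {b : ℝ} (h : ∀ t, |f t| ≤ b) :
    |⨆ t, f t| ≤ b := by
  rw [abs_le]
  obtain ⟨t⟩ := ‹Nonempty τ›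
  refine ⟨(abs_le.1 (h t)).1.trans (le_ciSup (f := f)
    ⟨b, by rintro _ ⟨t, rfl⟩; exact (abs_le.1 (h t)).2⟩ t), ?_⟩
  have : Nonempty τ := ⟨t⟩
  exact ciSup_le fun t => (abs_le.1 (h t)).2

lemma abs_penSup_le [Nonempty τ] (hB : ∀ t c, |u t c| ≤ B) {κ : ℝ} (hκ : 0 ≤ κ) (g : ι → ℝ) :
    |penSup u κ g| ≤ B * ∑ c, |g c| + κ * (Fintype.card ι * B ^ 2) :=
  abs_ciSup_le fun t => abs_pen_term_le hB hκ g t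

lemma measurable_penSup (hB : ∀ t c, |u t c| ≤ B) {κ : ℝ} (hκ : 0 ≤ κ) :
    Measurable (penSup u κ) := by
  unfold penSup
  exact (lowerSemicontinuous_ciSup (fun g => pen_bdd hB hκ g)
    (fun t => (by fun_prop : Continuous fun g : ι → ℝ =>
      ∑ c, g c * u t c - κ * ∑ c, u t c ^ 2).lowerSemicontinuous)).measurable

/-- One step of the rotation path: the increment of the penalty absorbs the Laplace transform of
the independent Gaussian direction. -/
lemma wills_step [Nonempty τ] (hB : ∀ t c, |u t c| ≤ B) {κ κ' N : ℝ} (hκ' : 0 ≤ κ')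
    (hN : 0 ≤ N) (δ : ℝ) (h : (N * Real.sin δ) ^ 2 / 2 ≤ N * (κ - κ')) (b : ι → ℝ) :
    ∫⁻ b', ENNReal.ofReal (Real.exp (N *
        (penSup u κ b - penSup u κ' (Real.cos δ • b + Real.sin δ • b')))) ∂(_root_.stdGaussian ι)
      ≤ ENNReal.ofReal (Real.exp (N * (1 - Real.cos δ) * penSup u 0 b)) := by
  have main : ∀ ε : ℝ, 0 < ε → ∫⁻ b', ENNReal.ofReal (Real.exp (N *
        (penSup u κ b - penSup u κ' (Real.cos δ • b + Real.sin δ • b')))) ∂(_root_.stdGaussian ι)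
      ≤ ENNReal.ofReal (Real.exp (N * (1 - Real.cos δ) * penSup u 0 b + N * ε)) := by
    intro ε hε
    obtain ⟨t, ht⟩ := exists_lt_of_lt_ciSup (show penSup u κ b - ε < penSup u κ b by linarith)
    have h0 : ∑ c, b c * u t c ≤ penSup u 0 b := by
      have := le_ciSup (pen_bdd hB le_rfl b) t
      simpa [penSup] using this
    calc _ ≤ ∫⁻ b', ENNReal.ofReal (Real.exp (N * (1 - Real.cos δ) * penSup u 0 b + N * ε
              - N * (κ - κ') * ∑ c, u t c ^ 2)) *
            ENNReal.ofReal (Real.exp (∑ c, (-(N * Real.sin δ) * u t c) * b' c))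
            ∂(_root_.stdGaussian ι) := by
          refine lintegral_mono fun b' => ?_
          rw [← ENNReal.ofReal_mul (Real.exp_pos _).le, ← Real.exp_add]
          refine ENNReal.ofReal_le_ofReal (Real.exp_le_exp.2 ?_)
          have h1 := le_ciSup (pen_bdd hB hκ' (Real.cos δ • b + Real.sin δ • b')) t
          have h2 : ∑ c, (Real.cos δ • b + Real.sin δ • b') c * u t c
              = Real.cos δ * ∑ c, b c * u t c + Real.sin δ * ∑ c, b' c * u t c := by
            simp only [Pi.add_apply, Pi.smul_apply, smul_eq_mul, Finset.mul_sum,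
              ← Finset.sum_add_distrib]
            exact Finset.sum_congr rfl fun c _ => by ring
          have h3 : ∑ c, (-(N * Real.sin δ) * u t c) * b' c
              = -(N * (Real.sin δ * ∑ c, b' c * u t c)) := by
            simp only [Finset.mul_sum, ← Finset.sum_neg_distrib]
            exact Finset.sum_congr rfl fun c _ => by ring
          change _ ≤ penSup u κ' _ at h1
          simp only [h2] at h1
          rw [h3]
          have h4 : (1 - Real.cos δ) * ∑ c, b c * u t c ≤ (1 - Real.cos δ) * penSup u 0 b :=
            mul_le_mul_of_nonneg_left h0 (by linarith [Real.cos_le_one δ])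
          have h5 : penSup u κ b - penSup u κ' (Real.cos δ • b + Real.sin δ • b')
              ≤ (1 - Real.cos δ) * penSup u 0 b + ε - (κ - κ') * ∑ c, u t c ^ 2
                - Real.sin δ * ∑ c, b' c * u t c := by linarith
          have h6 := mul_le_mul_of_nonneg_left h5 hN
          linarith
      _ = ENNReal.ofReal (Real.exp (N * (1 - Real.cos δ) * penSup u 0 b + N * ε
              - N * (κ - κ') * ∑ c, u t c ^ 2
              + (∑ c, (-(N * Real.sin δ) * u t c) ^ 2) / 2)) := by
          rw [lintegral_const_mul _ (by fun_prop), lintegral_exp_stdGaussian,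
            ← ENNReal.ofReal_mul (Real.exp_pos _).le, ← Real.exp_add]
      _ ≤ _ := by
          refine ENNReal.ofReal_le_ofReal (Real.exp_le_exp.2 ?_)
          have h7 : ∑ c, (-(N * Real.sin δ) * u t c) ^ 2
              = (N * Real.sin δ) ^ 2 * ∑ c, u t c ^ 2 := by
            rw [Finset.mul_sum]; exact Finset.sum_congr rfl fun c _ => by ring
          have h8 := mul_le_mul_of_nonneg_right h
            (Finset.sum_nonneg fun c (_ : c ∈ Finset.univ) => sq_nonneg (u t c))
          rw [h7]; linarith
  have hlim : Filter.Tendsto (fun ε : ℝ => ENNReal.ofReal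
      (Real.exp (N * (1 - Real.cos δ) * penSup u 0 b + N * ε))) (nhdsWithin 0 (Set.Ioi 0))
      (nhds (ENNReal.ofReal (Real.exp (N * (1 - Real.cos δ) * penSup u 0 b + N * 0)))) := by
    refine Filter.Tendsto.mono_left ?_ nhdsWithin_le_nhds
    exact (ENNReal.continuous_ofReal.comp (by fun_prop : Continuous fun ε : ℝ =>
      Real.exp (N * (1 - Real.cos δ) * penSup u 0 b + N * ε))).tendsto 0
  rw [mul_zero, add_zero] at hlim
  exact ge_of_tendsto hlim (Filter.eventually_of_mem self_mem_nhdsWithin fun ε hε => main ε hε)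

lemma exp_sum_le_avg (N : ℕ) (hN : 0 < N) (D : ℕ → ℝ) :
    Real.exp (∑ j ∈ Finset.range N, D j)
      ≤ ∑ j ∈ Finset.range N, (1 / (N : ℝ)) * Real.exp (N * D j) := by
  have hN' : (N : ℝ) ≠ 0 := by positivity
  have := convexOn_exp.map_sum_le (t := Finset.range N) (w := fun _ => 1 / (N : ℝ))
    (p := fun j => N * D j) (fun _ _ => by positivity) (by simp [hN']) (fun _ _ => Set.mem_univ _)
  simp only [smul_eq_mul] at this
  have h2 : ∑ j ∈ Finset.range N, 1 / (N : ℝ) * (N * D j) = ∑ j ∈ Finset.range N, D j :=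
    Finset.sum_congr rfl fun j _ => by field_simp
  rwa [h2] at this

/-- The rotation path cut into `N` pieces. -/
lemma wills_path [Nonempty τ] (hB : ∀ t c, |u t c| ≤ B) (N : ℕ) (hN : 0 < N) :
    ∫⁻ q, ENNReal.ofReal (Real.exp (penSup u 2 q.1 - penSup u 0 q.2))
        ∂((_root_.stdGaussian ι).prod (_root_.stdGaussian ι))
      ≤ ∫⁻ b, ENNReal.ofReal (Real.exp (N * (1 - Real.cos (Real.pi / (2 * N))) * penSup u 0 b))
        ∂(_root_.stdGaussian ι) := by
  have hN' : (0 : ℝ) < N := by positivity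
  set δ : ℝ := Real.pi / (2 * N) with hδ
  set γ := _root_.stdGaussian ι
  let path : ℕ → (ι → ℝ) × (ι → ℝ) → (ι → ℝ) := fun j q =>
    Real.cos (j * δ) • q.1 + Real.sin (j * δ) • q.2
  let kap : ℕ → ℝ := fun j => 2 * (1 - j / N)
  have hkap : ∀ j, j ≤ N → 0 ≤ kap j := fun j hj => by
    have : (j : ℝ) / N ≤ 1 := by rw [div_le_one hN']; exact_mod_cast hj
    simp only [kap]; linarith
  have hNδ : N * δ = Real.pi / 2 := by rw [hδ]; field_simp
  let D : ℕ → (ι → ℝ) × (ι → ℝ) → ℝ := fun j q =>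
    penSup u (kap j) (path j q) - penSup u (kap (j + 1)) (path (j + 1) q)
  have hD : ∀ q, penSup u 2 q.1 - penSup u 0 q.2 = ∑ j ∈ Finset.range N, D j q := by
    intro q
    rw [Finset.sum_range_sub' (fun j => penSup u (kap j) (path j q))]
    simp only [path, kap, hNδ]
    simp [hN'.ne']
  have hmeasD : ∀ j ∈ Finset.range N, Measurable (fun q => D j q) := by
    intro j hj
    have hj' := Finset.mem_range.1 hj
    exact ((measurable_penSup hB (hkap j hj'.le)).comp (by fun_prop)).sub
      ((measurable_penSup hB (hkap (j + 1) hj')).comp (by fun_prop))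
  set X := ∫⁻ b, ENNReal.ofReal (Real.exp (N * (1 - Real.cos δ) * penSup u 0 b)) ∂γ with hX
  have hstep : ∀ j ∈ Finset.range N,
      ∫⁻ q, ENNReal.ofReal (Real.exp (N * D j q)) ∂(γ.prod γ) ≤ X := by
    intro j hj
    have hj' := Finset.mem_range.1 hj
    let Dt : (ι → ℝ) × (ι → ℝ) → ℝ := fun q => penSup u (kap j) q.1
      - penSup u (kap (j + 1)) (Real.cos δ • q.1 + Real.sin δ • q.2)
    have hDt : Measurable Dt :=
      ((measurable_penSup hB (hkap j hj'.le)).comp (by fun_prop)).sub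
        ((measurable_penSup hB (hkap (j + 1) hj')).comp (by fun_prop))
    have hrot := measurePreserving_rotation (ι := ι) (j * δ)
    have hcomp : ∀ q : (ι → ℝ) × (ι → ℝ), D j q = Dt (Real.cos (j * δ) • q.1 + Real.sin (j * δ) • q.2,
        -Real.sin (j * δ) • q.1 + Real.cos (j * δ) • q.2) := by
      intro q
      simp only [D, Dt, path]
      congr 2
      push_cast
      rw [add_mul, one_mul, Real.cos_add, Real.sin_add]
      ext c
      simp only [Pi.add_apply, Pi.smul_apply, smul_eq_mul]
      ring
    simp_rw [hcomp]
    rw [hrot.lintegral_comp (f := fun q => ENNReal.ofReal (Real.exp (N * Dt q))) (by fun_prop),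
      lintegral_prod _ (by fun_prop)]
    refine lintegral_mono fun b => wills_step hB (hkap (j + 1) hj') hN'.le δ ?_ b
    -- the penalty drops by `2 / N` per step, while `(N sin δ)² ≤ (π / 2)² ≤ 4`
    have h1 : (N * Real.sin δ) ^ 2 ≤ (Real.pi / 2) ^ 2 := by
      have hδ0 : 0 ≤ δ := by rw [hδ]; positivity
      rw [← hNδ, mul_pow, mul_pow]
      exact mul_le_mul_of_nonneg_left (Real.sin_sq_le_sq) (by positivity)
    have h2 : N * (kap j - kap (j + 1)) = 2 := by
      simp only [kap]; push_cast; field_simp; ring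
    rw [h2]
    nlinarith [Real.pi_le_four, Real.pi_pos]
  calc _ ≤ ∫⁻ q, ∑ j ∈ Finset.range N, ENNReal.ofReal (1 / (N : ℝ)) *
          ENNReal.ofReal (Real.exp (N * D j q)) ∂(γ.prod γ) := by
        refine lintegral_mono fun q => ?_
        simp only
        rw [hD q]
        refine (ENNReal.ofReal_le_ofReal (exp_sum_le_avg N hN fun j => D j q)).trans ?_
        rw [ENNReal.ofReal_sum_of_nonneg fun j _ => by positivity]
        exact Finset.sum_le_sum fun j _ => by rw [ENNReal.ofReal_mul (by positivity)]
    _ = ∑ j ∈ Finset.range N, ENNReal.ofReal (1 / (N : ℝ)) *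
          ∫⁻ q, ENNReal.ofReal (Real.exp (N * D j q)) ∂(γ.prod γ) := by
        have hm : ∀ j ∈ Finset.range N, Measurable fun q =>
            ENNReal.ofReal (Real.exp (N * D j q)) := fun j hj =>
          ((hmeasD j hj).const_mul _).exp.ennreal_ofReal
        rw [lintegral_finsetSum' _ fun j hj => ((hm j hj).const_mul _).aemeasurable]
        exact Finset.sum_congr rfl fun j hj => lintegral_const_mul _ (hm j hj)
    _ ≤ ∑ j ∈ Finset.range N, ENNReal.ofReal (1 / (N : ℝ)) * X :=
        Finset.sum_le_sum fun j hj => mul_le_mul_right (hstep j hj) _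
    _ = X := by
        rw [Finset.sum_const, Finset.card_range, nsmul_eq_mul, ← mul_assoc,
          ← ENNReal.ofReal_natCast, ← ENNReal.ofReal_mul hN'.le]
        rw [mul_one_div_cancel hN'.ne', ENNReal.ofReal_one, one_mul]

lemma integrable_exp_mul_penSup_zero [Nonempty τ] (hB : ∀ t c, |u t c| ≤ B) (s : ℝ) :
    Integrable (fun g => Real.exp (s * penSup u 0 g)) (_root_.stdGaussian ι) := by
  refine integrable_of_exp_bound ((measurable_penSup hB le_rfl).const_mul s).exp 1 (|s| * B) ?_
  intro y
  rw [abs_of_pos (Real.exp_pos _), one_mul, Real.exp_le_exp, mul_assoc]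
  have := abs_penSup_le hB (le_refl (0:ℝ)) y
  rw [zero_mul, add_zero] at this
  calc s * penSup u 0 y ≤ |s * penSup u 0 y| := le_abs_self _
    _ = |s| * |penSup u 0 y| := abs_mul _ _
    _ ≤ _ := mul_le_mul_of_nonneg_left this (abs_nonneg _)

/-- Decoupled form of the Wills functional bound. -/
lemma wills_decoupled [Nonempty τ] (hB : ∀ t c, |u t c| ≤ B) :
    ∫⁻ q, ENNReal.ofReal (Real.exp (penSup u 2 q.1 - penSup u 0 q.2))
        ∂((_root_.stdGaussian ι).prod (_root_.stdGaussian ι)) ≤ 1 := by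
  set γ := _root_.stdGaussian ι
  set E := ∫ g, Real.exp (1 * penSup u 0 g) ∂γ with hE
  have hE0 : 0 ≤ E := integral_nonneg fun _ => (Real.exp_pos _).le
  have hbound : ∀ N : ℕ, 2 ≤ N →
      ∫⁻ q, ENNReal.ofReal (Real.exp (penSup u 2 q.1 - penSup u 0 q.2)) ∂(γ.prod γ)
        ≤ ENNReal.ofReal (1 + 2 * E * (1 / (N : ℝ))) := by
    intro N hN
    refine (wills_path hB N (by omega)).trans ?_
    have hN' : (2 : ℝ) ≤ N := by exact_mod_cast hN
    set s : ℝ := N * (1 - Real.cos (Real.pi / (2 * N))) with hs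
    have hs0 : 0 ≤ s := mul_nonneg (by linarith) (by linarith [Real.cos_le_one (Real.pi / (2 * N))])
    have hs1 : s ≤ 2 * (1 / (N : ℝ)) := by
      have h1 := Real.one_sub_sq_div_two_le_cos (x := Real.pi / (2 * N))
      have h2 : s ≤ N * ((Real.pi / (2 * N)) ^ 2 / 2) :=
        mul_le_mul_of_nonneg_left (by linarith) (by linarith)
      refine h2.trans ?_
      have h3 : N * ((Real.pi / (2 * N)) ^ 2 / 2) = Real.pi ^ 2 / 8 * (1 / (N : ℝ)) := by
        field_simp; ring
      rw [h3]
      refine mul_le_mul_of_nonneg_right ?_ (by positivity)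
      nlinarith [Real.pi_le_four, Real.pi_pos]
    have hs2 : s ≤ 1 := hs1.trans (by
      rw [mul_one_div, div_le_one (by linarith)]; exact hN')
    rw [← ofReal_integral_eq_lintegral_ofReal (integrable_exp_mul_penSup_zero hB s)
      (Filter.Eventually.of_forall fun _ => (Real.exp_pos _).le)]
    refine ENNReal.ofReal_le_ofReal ?_
    calc ∫ g, Real.exp (s * penSup u 0 g) ∂γ
        ≤ ∫ g, ((1 - s) + s * Real.exp (1 * penSup u 0 g)) ∂γ := by
          refine integral_mono (integrable_exp_mul_penSup_zero hB s)
            ((integrable_const _).add ((integrable_exp_mul_penSup_zero hB 1).const_mul s))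
            fun g => ?_
          have := convexOn_exp.2 (Set.mem_univ 0) (Set.mem_univ (penSup u 0 g))
            (show 0 ≤ 1 - s by linarith) hs0 (by ring)
          simpa using this
      _ = (1 - s) + s * E := by
          rw [integral_add (integrable_const _)
            ((integrable_exp_mul_penSup_zero hB 1).const_mul s), integral_const_mul,
            integral_const, probReal_univ, one_smul]
      _ ≤ _ := by nlinarith
  have hlim : Filter.Tendsto (fun N : ℕ => ENNReal.ofReal (1 + 2 * E * (1 / (N : ℝ))))
      Filter.atTop (nhds (ENNReal.ofReal (1 + 2 * E * 0))) := by
    refine (ENNReal.continuous_ofReal.tendsto _).comp ?_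
    exact (tendsto_one_div_atTop_nhds_zero_nat.const_mul _).const_add _
  rw [mul_zero, add_zero, ENNReal.ofReal_one] at hlim
  exact ge_of_tendsto hlim (Filter.eventually_atTop.2 ⟨2, hbound⟩)

/-- The Wills functional of a Gaussian process is at most the exponential of the expected
supremum. (The sharp penalty is half the variance; any constant suffices below.) -/
lemma wills [Nonempty τ] (hB : ∀ t c, |u t c| ≤ B) :
    ∫⁻ g, ENNReal.ofReal (Real.exp (penSup u 2 g
        - ∫ g', penSup u 0 g' ∂(_root_.stdGaussian ι))) ∂(_root_.stdGaussian ι) ≤ 1 := by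
  refine le_trans ?_ (wills_decoupled hB)
  set γ := _root_.stdGaussian ι
  have hm2 := measurable_penSup hB (zero_le_two : (0:ℝ) ≤ 2)
  have hm0 := measurable_penSup hB (le_refl (0:ℝ))
  rw [lintegral_prod _ (by fun_prop)]
  refine lintegral_mono fun g => ?_
  set m := ∫ g', penSup u 0 g' ∂γ with hm
  have hi0 : Integrable (penSup u 0) γ := by
    refine integrable_of_exp_bound hm0 1 B fun y => ?_
    have := abs_penSup_le hB (le_refl (0:ℝ)) y
    rw [zero_mul, add_zero] at this
    rw [one_mul]
    linarith [Real.add_one_le_exp (B * ∑ c, |y c|)]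
  have hie : Integrable (fun g' => Real.exp (penSup u 2 g - penSup u 0 g')) γ := by
    refine ((integrable_exp_mul_penSup_zero hB (-1)).const_mul
      (Real.exp (penSup u 2 g))).congr (Filter.Eventually.of_forall fun g' => ?_)
    simp only [← Real.exp_add]
    congr 1; ring
  rw [← ofReal_integral_eq_lintegral_ofReal hie
    (Filter.Eventually.of_forall fun _ => (Real.exp_pos _).le)]
  refine ENNReal.ofReal_le_ofReal ?_
  have hi1 : Integrable (fun g' => m - penSup u 0 g' + 1) γ :=
    ((integrable_const _).sub hi0).add (integrable_const _)
  calc Real.exp (penSup u 2 g - m)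
      = ∫ g', Real.exp (penSup u 2 g - m) * (m - penSup u 0 g' + 1) ∂γ := by
        have h1 : Integrable (fun g' => m - penSup u 0 g') γ := (integrable_const _).sub hi0
        rw [integral_const_mul, integral_add h1 (integrable_const _),
          integral_sub (integrable_const _) hi0, ← hm]
        simp
    _ ≤ _ := by
        refine integral_mono (hi1.const_mul _) hie fun g' => ?_
        have h2 : penSup u 2 g - penSup u 0 g' = (penSup u 2 g - m) + (m - penSup u 0 g') := by ring
        simp only
        rw [h2, Real.exp_add]
        exact mul_le_mul_of_nonneg_left (Real.add_one_le_exp _) (Real.exp_pos _).le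

end Wills



/-! ### Smoothing a Gaussian supremum over a parameter set -/

section Smoothing

variable {ι κ τ : Type*} [Fintype ι] [Fintype κ]

lemma measurable_penSup_joint {U : (κ → ℝ) → τ → ι → ℝ} (hc : ∀ t l, Continuous fun z => U z t l)
    {b : (κ → ℝ) → ℝ} (hb : ∀ z t l, |U z t l| ≤ b z) {q : ℝ} (hq : 0 ≤ q) :
    Measurable (fun w : (ι → ℝ) × (κ → ℝ) => penSup (U w.2) q w.1) := by
  have hbd : ∀ w : (ι → ℝ) × (κ → ℝ), BddAbove (Set.range fun t =>
      ∑ c, w.1 c * U w.2 t c - q * ∑ c, U w.2 t c ^ 2) := fun w => pen_bdd (hb w.2) hq w.1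
  refine (lowerSemicontinuous_ciSup (f := fun t (w : (ι → ℝ) × (κ → ℝ)) =>
    ∑ c, w.1 c * U w.2 t c - q * ∑ c, U w.2 t c ^ 2) hbd (fun t => ?_)).measurable
  have h1 : ∀ l, Continuous fun w : (ι → ℝ) × (κ → ℝ) => U w.2 t l := fun l =>
    (hc t l).comp continuous_snd
  exact (by fun_prop : Continuous fun w : (ι → ℝ) × (κ → ℝ) =>
      ∑ c, w.1 c * U w.2 t c - q * ∑ c, U w.2 t c ^ 2).lowerSemicontinuous

lemma penSup_smul (u : τ → ι → ℝ) {r : ℝ} (hr : 0 ≤ r) (g : ι → ℝ) :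
    penSup (fun t c => r * u t c) 0 g = r * penSup u 0 g := by
  unfold penSup
  rw [Real.mul_iSup_of_nonneg hr]
  congr 1; ext t
  rw [zero_mul, zero_mul, sub_zero, sub_zero, Finset.mul_sum]
  exact Finset.sum_congr rfl fun c _ => by ring

lemma sum_abs_add_le (y v : κ → ℝ) : ∑ c, |(y + v) c| ≤ ∑ c, |y c| + ∑ c, |v c| := by
  rw [← Finset.sum_add_distrib]
  exact Finset.sum_le_sum fun c _ => abs_add_le _ _

/-- If a function has exponential growth, so does each of its translates. -/
lemma integrable_shift_of_exp_bound {F : (κ → ℝ) → ℝ} (hF : Measurable F) {B a : ℝ} (hB : 0 ≤ B)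
    (ha : 0 ≤ a) (h : ∀ y, |F y| ≤ B * Real.exp (a * ∑ c, |y c|)) (v : κ → ℝ) :
    Integrable (fun y => F (y + v)) (_root_.stdGaussian κ) := by
  refine integrable_of_exp_bound (hF.comp (by fun_prop)) (B * Real.exp (a * ∑ c, |v c|)) a
    fun y => (h _).trans ?_
  rw [mul_assoc, ← Real.exp_add]
  refine mul_le_mul_of_nonneg_left (Real.exp_le_exp.2 ?_) hB
  nlinarith [sum_abs_add_le y v]

lemma measurable_integral_penSup {U : (κ → ℝ) → τ → ι → ℝ}
    (hc : ∀ t l, Continuous fun z => U z t l)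
    {b : (κ → ℝ) → ℝ} (hb : ∀ z t l, |U z t l| ≤ b z) :
    Measurable (fun z => ∫ ω, penSup (U z) 0 ω ∂(_root_.stdGaussian ι)) := by
  have h := (measurable_penSup_joint hc hb (le_refl (0 : ℝ))).comp
    (measurable_swap (α := κ → ℝ) (β := ι → ℝ))
  exact (h.stronglyMeasurable.integral_prod_right'
    (ν := _root_.stdGaussian ι)).measurable

lemma integrable_sum_abs : Integrable (fun ω : ι → ℝ => ∑ c, |ω c|) (_root_.stdGaussian ι) := by
  refine integrable_of_exp_bound (by fun_prop) 1 1 fun y => ?_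
  rw [abs_of_nonneg (Finset.sum_nonneg fun _ _ => abs_nonneg _), one_mul, one_mul]
  linarith [Real.add_one_le_exp (∑ c, |y c|)]

lemma integrable_penSup_zero [Nonempty τ] {u : τ → ι → ℝ} {B : ℝ} (hB : ∀ t c, |u t c| ≤ B) :
    Integrable (penSup u 0) (_root_.stdGaussian ι) := by
  refine (integrable_sum_abs.const_mul B).mono' (measurable_penSup hB le_rfl).aestronglyMeasurable
    (Filter.Eventually.of_forall fun ω => ?_)
  simpa using abs_penSup_le hB (le_refl (0 : ℝ)) ω

lemma abs_integral_penSup_le [Nonempty τ] {u : τ → ι → ℝ} {B : ℝ} (hB : ∀ t c, |u t c| ≤ B) :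
    |∫ ω, penSup u 0 ω ∂(_root_.stdGaussian ι)|
      ≤ B * ∫ ω, ∑ c, |ω c| ∂(_root_.stdGaussian ι) := by
  rw [← integral_const_mul]
  refine (abs_integral_le_integral_abs).trans (integral_mono (integrable_penSup_zero hB).abs
    (integrable_sum_abs.const_mul B) fun ω => ?_)
  simpa using abs_penSup_le hB (le_refl (0 : ℝ)) ω

/-- The smoothing inequality. The parameter `v` is randomised to `v + y` with `y` Gaussian; the
entropic cost of the shift is `|v|² / 2`, and the Wills functional bound controls the exponential
moment of the penalised supremum, uniformly in `v`. -/
lemma smoothing_bound [Nonempty τ] (U : (κ → ℝ) → τ → ι → ℝ)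
    (hc : ∀ t l, Continuous fun z => U z t l) (C a : ℝ) (hC : 0 ≤ C) (ha : 0 ≤ a)
    (hU : ∀ z t l, |U z t l| ≤ C * Real.exp (a * ∑ c, |z c|))
    (V : Set (κ → ℝ)) (D Q Hb : ℝ) (hD : ∀ v ∈ V, ∑ c, v c ^ 2 ≤ D)
    (hmean : ∀ v ∈ V, ∀ t l, ∫ y, U (y + v) t l ∂(_root_.stdGaussian κ) = U v t l)
    (hQ : ∀ v ∈ V, ∀ t, ∫ y, ∑ l, U (y + v) t l ^ 2 ∂(_root_.stdGaussian κ) ≤ Q)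
    (hH : ∀ v ∈ V, ∫ y, ∫ ω, penSup (U (y + v)) 0 ω ∂(_root_.stdGaussian ι)
      ∂(_root_.stdGaussian κ) ≤ Hb)
    (r : ℝ) (hr : 0 < r) (F : (ι → ℝ) → ℝ) (hF0 : ∀ ω, 0 ≤ F ω)
    (hF : ∀ ω B, (∀ v ∈ V, ∀ t, ∑ l, ω l * U v t l ≤ B) → F ω ≤ B) :
    ∫ ω, F ω ∂(_root_.stdGaussian ι) ≤ 2 * r * Q + Hb + D / (2 * r) := by
  set γ := _root_.stdGaussian κ with hγ
  set μ := _root_.stdGaussian ι with hμ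
  let b : (κ → ℝ) → ℝ := fun z => C * Real.exp (a * ∑ c, |z c|)
  have hb0 : ∀ z, 0 ≤ b z := fun z => mul_nonneg hC (Real.exp_pos _).le
  let W : (κ → ℝ) → τ → ι → ℝ := fun z t l => r * U z t l
  have hWc : ∀ t l, Continuous fun z => W z t l := fun t l => continuous_const.mul (hc t l)
  have hWb : ∀ z t l, |W z t l| ≤ r * b z := fun z t l => by
    rw [abs_mul, abs_of_pos hr]; exact mul_le_mul_of_nonneg_left (hU z t l) hr.le
  let Φ : (ι → ℝ) × (κ → ℝ) → ℝ := fun w => penSup (W w.2) 2 w.1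
  have hΦ : Measurable Φ := measurable_penSup_joint hWc hWb zero_le_two
  let H : (κ → ℝ) → ℝ := fun z => ∫ ω, penSup (W z) 0 ω ∂μ
  have hHm : Measurable H := measurable_integral_penSup hWc hWb
  have hHr : ∀ z, H z = r * ∫ ω, penSup (U z) 0 ω ∂μ := fun z => by
    simp only [H, W, ← integral_const_mul]
    exact integral_congr_ae (Filter.Eventually.of_forall fun ω => penSup_smul _ hr.le ω)
  let Ψ : (ι → ℝ) → (κ → ℝ) → ℝ := fun ω z => Φ (ω, z) - H z
  have hΨj : Measurable fun w : (ι → ℝ) × (κ → ℝ) => Ψ w.1 w.2 :=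
    hΦ.sub (hHm.comp measurable_snd)
  let J : (ι → ℝ) → ENNReal := fun ω => ∫⁻ z, ENNReal.ofReal (Real.exp (Ψ ω z)) ∂γ
  have hJm : Measurable J :=
    Measurable.lintegral_prod_right' (f := fun w : (ι → ℝ) × (κ → ℝ) =>
      ENNReal.ofReal (Real.exp (Ψ w.1 w.2))) (by fun_prop)
  have hJ1 : ∫⁻ ω, J ω ∂μ ≤ 1 := by
    simp only [J]
    rw [lintegral_lintegral_swap (by
      exact (hΨj.exp.ennreal_ofReal).aemeasurable)]
    calc _ ≤ ∫⁻ _, 1 ∂γ := lintegral_mono fun z => wills (hWb z)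
      _ = 1 := by simp
  have hJfin : ∀ᵐ ω ∂μ, J ω < ⊤ := ae_lt_top hJm (hJ1.trans_lt ENNReal.one_lt_top).ne
  have hΨm : ∀ ω, Measurable (Ψ ω) := fun ω =>
    (hΦ.comp measurable_prodMk_left).sub hHm
  -- growth of the penalised supremum in the smoothing variable
  have hexp2 : ∀ z : κ → ℝ, Real.exp (a * ∑ c, |z c|) ≤ Real.exp (2 * a * ∑ c, |z c|) := fun z =>
    Real.exp_le_exp.2 (by
      have : 0 ≤ a * ∑ c, |z c| := mul_nonneg ha (Finset.sum_nonneg fun _ _ => abs_nonneg _)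
      linarith)
  have hΦg : ∀ ω z, |Φ (ω, z)| ≤ (r * C * ∑ c, |ω c| + 2 * (Fintype.card ι * (r * C) ^ 2))
      * Real.exp (2 * a * ∑ c, |z c|) := by
    intro ω z
    refine (abs_penSup_le (hWb z) zero_le_two ω).trans ?_
    have h1 : r * b z * ∑ c, |ω c| ≤ r * C * (∑ c, |ω c|) * Real.exp (2 * a * ∑ c, |z c|) := by
      have h0 : 0 ≤ r * C * ∑ c, |ω c| :=
        mul_nonneg (mul_nonneg hr.le hC) (Finset.sum_nonneg fun _ _ => abs_nonneg _)
      have := mul_le_mul_of_nonneg_left (hexp2 z) h0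
      simp only [b]; linarith
    have h2 : (r * b z) ^ 2 = (r * C) ^ 2 * Real.exp (2 * a * ∑ c, |z c|) := by
      simp only [b]
      rw [show 2 * a * ∑ c, |z c| = a * ∑ c, |z c| + a * ∑ c, |z c| by ring, Real.exp_add]
      ring
    rw [h2]; linarith
  have hHg : ∀ z, |H z| ≤ (r * C * ∫ ω, ∑ c, |ω c| ∂μ) * Real.exp (a * ∑ c, |z c|) := by
    intro z
    refine (abs_integral_penSup_le (hWb z)).trans (le_of_eq ?_)
    simp only [b]; ring
  have hn0 : 0 ≤ ∫ ω : ι → ℝ, ∑ c, |ω c| ∂μ :=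
    integral_nonneg fun ω => Finset.sum_nonneg fun _ _ => abs_nonneg _
  have hΦi : ∀ ω v, Integrable (fun y => Φ (ω, y + v)) γ := fun ω v =>
    integrable_shift_of_exp_bound (F := fun z => Φ (ω, z))
      (hΦ.comp measurable_prodMk_left)
      (add_nonneg (mul_nonneg (mul_nonneg hr.le hC) (Finset.sum_nonneg fun _ _ => abs_nonneg _))
        (by positivity)) (by linarith) (hΦg ω) v
  have hHi : ∀ v, Integrable (fun y => H (y + v)) γ := fun v =>
    integrable_shift_of_exp_bound hHm (mul_nonneg (mul_nonneg hr.le hC) hn0) ha hHg v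
  have hUi : ∀ v t l, Integrable (fun y => U (y + v) t l) γ := fun v t l =>
    integrable_shift_of_exp_bound (F := fun z => U z t l) (hc t l).measurable hC ha
      (fun z => hU z t l) v
  have hU2i : ∀ v t l, Integrable (fun y => U (y + v) t l ^ 2) γ := fun v t l => by
    refine integrable_shift_of_exp_bound (F := fun z => U z t l ^ 2)
      ((hc t l).measurable.pow_const 2) (B := C ^ 2) (a := 2 * a) (by positivity) (by linarith)
      (fun z => ?_) v
    rw [abs_pow]
    refine (pow_le_pow_left₀ (abs_nonneg _) (hU z t l) 2).trans (le_of_eq ?_)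
    rw [show 2 * a * ∑ c, |z c| = a * ∑ c, |z c| + a * ∑ c, |z c| by ring, Real.exp_add]
    ring
  -- the pointwise estimate, for almost every Gaussian vector
  have key : ∀ᵐ ω ∂μ, F ω ≤ (D / 2 + (J ω).toReal - 1 + r * Hb + 2 * r ^ 2 * Q) / r := by
    filter_upwards [hJfin] with ω hω
    refine hF ω _ fun v hv t => ?_
    rw [le_div_iff₀ hr]
    have hlin : (∑ l, ω l * U v t l) * r = ∫ y, ∑ l, ω l * W (y + v) t l ∂γ := by
      rw [integral_finsetSum _ fun l _ => ((hUi v t l).const_mul r).const_mul (ω l),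
        Finset.sum_mul]
      refine Finset.sum_congr rfl fun l _ => ?_
      rw [integral_const_mul, integral_const_mul, hmean v hv t l]; ring
    have hS2 : Integrable (fun y => ∑ l, U (y + v) t l ^ 2) γ :=
      integrable_finsetSum _ fun l _ => hU2i v t l
    have hstep : (∑ l, ω l * U v t l) * r
        ≤ ∫ y, (Φ (ω, y + v) + 2 * r ^ 2 * ∑ l, U (y + v) t l ^ 2) ∂γ := by
      rw [hlin]
      refine integral_mono (integrable_finsetSum _ fun l _ =>
        ((hUi v t l).const_mul r).const_mul (ω l)) ((hΦi ω v).add (hS2.const_mul _)) fun y => ?_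
      have h1 := le_ciSup (pen_bdd (hWb (y + v)) zero_le_two ω) t
      change _ ≤ Φ (ω, y + v) at h1
      have h2 : ∑ l, W (y + v) t l ^ 2 = r ^ 2 * ∑ l, U (y + v) t l ^ 2 := by
        rw [Finset.mul_sum]; exact Finset.sum_congr rfl fun l _ => by simp only [W]; ring
      simp only [h2] at h1
      simp only
      linarith
    have hei : Integrable (fun z => Real.exp (Ψ ω z)) γ := by
      refine ⟨(hΨm ω).exp.aestronglyMeasurable, ?_⟩
      rw [hasFiniteIntegral_iff_ofReal (Filter.Eventually.of_forall fun _ => (Real.exp_pos _).le)]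
      exact hω
    have hΨi : Integrable (fun y => Ψ ω (y + v)) γ := (hΦi ω v).sub (hHi v)
    have hdv := shift_integral_le v (hΨm ω) hei hΨi
    have hJe : ∫ y, Real.exp (Ψ ω y) ∂γ = (J ω).toReal :=
      integral_eq_lintegral_of_nonneg_ae (Filter.Eventually.of_forall fun _ => (Real.exp_pos _).le)
        (hΨm ω).exp.aestronglyMeasurable
    have hsplit : ∫ y, Ψ ω (y + v) ∂γ = ∫ y, Φ (ω, y + v) ∂γ - ∫ y, H (y + v) ∂γ :=
      integral_sub (hΦi ω v) (hHi v)
    have hHv : ∫ y, H (y + v) ∂γ ≤ r * Hb := by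
      simp only [hHr]
      rw [integral_const_mul]
      exact mul_le_mul_of_nonneg_left (hH v hv) hr.le
    rw [integral_add (hΦi ω v) (hS2.const_mul _), integral_const_mul] at hstep
    have hq := mul_le_mul_of_nonneg_left (hQ v hv t) (show 0 ≤ 2 * r ^ 2 by positivity)
    have hd := hD v hv
    rw [← hγ, hJe, hsplit] at hdv
    linarith
  have hJi : Integrable (fun ω => (J ω).toReal) μ :=
    integrable_toReal_of_lintegral_ne_top hJm.aemeasurable (hJ1.trans_lt ENNReal.one_lt_top).ne
  have hJint : ∫ ω, (J ω).toReal ∂μ ≤ 1 := by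
    rw [integral_toReal hJm.aemeasurable hJfin]
    exact ENNReal.toReal_le_of_le_ofReal zero_le_one (by simpa using hJ1)
  have hi1 : Integrable (fun ω => D / 2 + (J ω).toReal - 1 + r * Hb + 2 * r ^ 2 * Q) μ := by
    fun_prop
  calc ∫ ω, F ω ∂μ ≤ ∫ ω, (D / 2 + (J ω).toReal - 1 + r * Hb + 2 * r ^ 2 * Q) / r ∂μ :=
        integral_mono_of_nonneg (Filter.Eventually.of_forall hF0) (hi1.div_const r) key
    _ = (∫ ω, (J ω).toReal ∂μ + (D / 2 - 1 + r * Hb + 2 * r ^ 2 * Q)) / r := by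
        rw [integral_div]
        congr 1
        have h3 : ∀ ω, D / 2 + (J ω).toReal - 1 + r * Hb + 2 * r ^ 2 * Q
            = (J ω).toReal + (D / 2 - 1 + r * Hb + 2 * r ^ 2 * Q) := fun ω => by ring
        simp only [h3]
        rw [integral_add hJi (integrable_const _), integral_const, probReal_univ, one_smul]
    _ ≤ (1 + (D / 2 - 1 + r * Hb + 2 * r ^ 2 * Q)) / r := by gcongr
    _ = _ := by field_simp; ring

end Smoothing


/-! ### Moments of Gaussian monomials -/

section Moments

/-- Restricting a standard Gaussian vector along an injection of index sets gives a standard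
Gaussian vector. -/
lemma measurePreserving_reindex {α β : Type*} [Fintype α] [Fintype β] (e : α → β)
    (he : Function.Injective e) :
    MeasurePreserving (fun (y : β → ℝ) a => y (e a)) (_root_.stdGaussian β)
      (_root_.stdGaussian α) := by
  refine ⟨by fun_prop, ?_⟩
  have h1 : iIndepFun (fun (b : β) (ω : β → ℝ) => ω b) (_root_.stdGaussian β) :=
    iIndepFun_pi (μ := fun _ : β => gaussianReal 0 1) (X := fun _ x => x) (fun _ => aemeasurable_id)
  have h2 := h1.precomp he
  rw [iIndepFun_iff_map_fun_eq_pi_map (fun a => (measurable_pi_apply (e a)).aemeasurable)] at h2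
  rw [h2, _root_.stdGaussian]
  congr 1
  ext1 a
  exact (measurePreserving_eval (fun _ : β => gaussianReal 0 1) (e a)).map_eq

variable {K L : Type*} [Fintype K] [Fintype L]

/-- Expectation of a product of functions of independent coordinates, one in each block. -/
lemma integral_prod_section (i : K → L) {f : K → ℝ → ℝ} (hf : ∀ k, Measurable (f k)) :
    ∫ y, ∏ k, f k (y (k, i k)) ∂(_root_.stdGaussian (K × L))
      = ∏ k, ∫ x, f k x ∂(gaussianReal 0 1) := by
  have h := measurePreserving_reindex (fun k : K => (k, i k))
    (fun a b hab => (Prod.ext_iff.1 hab).1)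
  rw [← integral_fintype_prod_eq_prod, ← _root_.stdGaussian, ← h.map_eq,
    integral_map h.measurable.aemeasurable]
  exact (by fun_prop : Measurable fun x : K → ℝ => ∏ k, f k (x k)).aestronglyMeasurable

lemma integral_id_gaussianReal_zero : ∫ x, x ∂(gaussianReal 0 1) = 0 := by
  simp

lemma integral_sq_gaussianReal : ∫ x, x ^ 2 ∂(gaussianReal 0 1) = 1 := by
  have := variance_fun_id_gaussianReal (μ := 0) (v := 1)
  rw [variance_of_integral_eq_zero (by fun_prop) (by simp)] at this
  simpa using this

lemma integrable_id_gaussianReal_one : Integrable (fun x : ℝ => x) (gaussianReal 0 1) :=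
  (memLp_id_gaussianReal 1).integrable (by simp)

/-- Flipping the sign of one coordinate preserves the standard Gaussian measure. -/
lemma measurePreserving_flip {α : Type*} [Fintype α] [DecidableEq α] (c : α) :
    MeasurePreserving (fun (y : α → ℝ) a => if a = c then -y a else y a) (_root_.stdGaussian α)
      (_root_.stdGaussian α) := by
  have : ∀ a : α, MeasurePreserving (fun x : ℝ => if a = c then -x else x)
      (gaussianReal 0 1) (gaussianReal 0 1) := by
    intro a
    by_cases h : a = c
    · simp only [h, if_true]
      exact ⟨by fun_prop, by simpa using gaussianReal_map_neg (μ := 0) (v := 1)⟩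
    · simp only [h, if_false]
      exact MeasurePreserving.id _
  exact measurePreserving_pi (fun _ : α => gaussianReal 0 1) (fun _ => gaussianReal 0 1) this

/-- Orthonormality of the multilinear Gaussian monomials supported on the blocks in `I`. -/
lemma integral_monomial_mul (I : Finset K) (i i' : K → L) :
    ∫ y, (∏ k ∈ I, y (k, i k)) * ∏ k ∈ I, y (k, i' k) ∂(_root_.stdGaussian (K × L))
      = if ∀ k ∈ I, i k = i' k then 1 else 0 := by
  split_ifs with h
  · have h1 : ∀ y : K × L → ℝ, (∏ k ∈ I, y (k, i k)) * ∏ k ∈ I, y (k, i' k)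
        = ∏ k, (fun x : ℝ => if k ∈ I then x ^ 2 else 1) (y (k, i k)) := by
      intro y
      rw [← Finset.prod_mul_distrib, Finset.prod_ite_mem, Finset.univ_inter]
      exact Finset.prod_congr rfl fun k hk => by rw [h k hk]; ring
    simp_rw [h1]
    rw [integral_prod_section i (f := fun k x => if k ∈ I then x ^ 2 else 1)
      (fun k => by split_ifs <;> fun_prop)]
    refine Finset.prod_eq_one fun k _ => ?_
    by_cases hk : k ∈ I
    · simpa [hk] using integral_sq_gaussianReal
    · simp [hk]
  · push Not at h
    obtain ⟨k₀, hk₀, hne⟩ := h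
    have hflip := measurePreserving_flip (k₀, i k₀)
    let F : (K × L → ℝ) → ℝ := fun y => (∏ k ∈ I, y (k, i k)) * ∏ k ∈ I, y (k, i' k)
    have hF : ∀ y : K × L → ℝ, F (fun a => if a = (k₀, i k₀) then -y a else y a) = - F y := by
      intro y
      have h1 : ∏ k ∈ I, (if (k, i k) = (k₀, i k₀) then -y (k, i k) else y (k, i k))
          = - ∏ k ∈ I, y (k, i k) := by
        rw [← Finset.mul_prod_erase I _ hk₀, ← Finset.mul_prod_erase I (fun k => y (k, i k)) hk₀,
          if_pos rfl, neg_mul]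
        congr 2
        refine Finset.prod_congr rfl fun k hk => if_neg ?_
        intro hc
        exact (Finset.mem_erase.1 hk).1 (Prod.ext_iff.1 hc).1
      have h2 : ∏ k ∈ I, (if (k, i' k) = (k₀, i k₀) then -y (k, i' k) else y (k, i' k))
          = ∏ k ∈ I, y (k, i' k) := by
        refine Finset.prod_congr rfl fun k hk => if_neg ?_
        intro hc
        obtain ⟨h3, h4⟩ := Prod.ext_iff.1 hc
        simp only at h3 h4
        subst h3
        exact hne h4.symm
      simp only [F]
      rw [h1, h2, neg_mul]
    have hi : ∫ y, F y ∂(_root_.stdGaussian (K × L)) = - ∫ y, F y ∂(_root_.stdGaussian (K × L)) := by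
      rw [← integral_neg]
      simp_rw [← hF]
      have hFm : Measurable F := by fun_prop
      conv_lhs => rw [← hflip.map_eq]
      rw [integral_map hflip.measurable.aemeasurable hFm.aestronglyMeasurable]
    change ∫ y, F y ∂_ = 0
    linarith

lemma prod_abs_le_exp {α : Type*} (s : Finset α) (f : α → ℝ) :
    |∏ k ∈ s, f k| ≤ Real.exp (∑ k ∈ s, |f k|) := by
  rw [Finset.abs_prod, Real.exp_sum]
  exact Finset.prod_le_prod (fun _ _ => abs_nonneg _) fun k _ =>
    by linarith [Real.add_one_le_exp |f k|]

lemma sum_section_le (I : Finset K) (i : K → L) (y : K × L → ℝ) :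
    ∑ k ∈ I, |y (k, i k)| ≤ ∑ c, |y c| := by
  rw [← Finset.sum_image (s := I) (g := fun k => (k, i k)) (f := fun c => |y c|)
    (fun a _ b _ hab => (Prod.ext_iff.1 hab).1)]
  exact Finset.sum_le_sum_of_subset_of_nonneg (Finset.subset_univ _) fun _ _ _ => abs_nonneg _

lemma abs_monomial_le (I : Finset K) (i : K → L) (y : K × L → ℝ) :
    |∏ k ∈ I, y (k, i k)| ≤ Real.exp (∑ c, |y c|) :=
  (prod_abs_le_exp I _).trans (Real.exp_le_exp.2 (sum_section_le I i y))

lemma integrable_monomial_mul (I : Finset K) (i i' : K → L) :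
    Integrable (fun y : K × L → ℝ => (∏ k ∈ I, y (k, i k)) * ∏ k ∈ I, y (k, i' k))
      (_root_.stdGaussian (K × L)) := by
  refine integrable_of_exp_bound (by fun_prop) 1 2 fun y => ?_
  rw [abs_mul, one_mul, two_mul, Real.exp_add]
  exact mul_le_mul (abs_monomial_le I i y) (abs_monomial_le I i' y) (abs_nonneg _)
    (Real.exp_pos _).le

/-- Second moment of a multilinear Gaussian form in the blocks of `I`. -/
lemma integral_form_sq (I : Finset K) {α : Type*} [Fintype α] (i : α → K → L) (c : α → ℝ) :
    ∫ y, (∑ w, c w * ∏ k ∈ I, y (k, i w k)) ^ 2 ∂(_root_.stdGaussian (K × L))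
      = ∑ w, ∑ w', if ∀ k ∈ I, i w k = i w' k then c w * c w' else 0 := by
  have h1 : ∀ y : K × L → ℝ, (∑ w, c w * ∏ k ∈ I, y (k, i w k)) ^ 2
      = ∑ w, ∑ w', (c w * c w') * ((∏ k ∈ I, y (k, i w k)) * ∏ k ∈ I, y (k, i w' k)) := by
    intro y
    rw [sq, Finset.sum_mul_sum]
    exact Finset.sum_congr rfl fun w _ => Finset.sum_congr rfl fun w' _ => by ring
  simp_rw [h1]
  rw [integral_finsetSum _ fun w _ => integrable_finsetSum _ fun w' _ =>
    (integrable_monomial_mul I (i w) (i w')).const_mul _]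
  refine Finset.sum_congr rfl fun w _ => ?_
  rw [integral_finsetSum _ fun w' _ => (integrable_monomial_mul I (i w) (i w')).const_mul _]
  refine Finset.sum_congr rfl fun w' _ => ?_
  rw [integral_const_mul, integral_monomial_mul]
  split_ifs <;> simp

end Moments


/-! ### The Gaussian process attached to an array -/

section ArrayForm

variable {n m d : ℕ}

/-- Contraction of the array `A` with `t` in its last index. -/
def contr (A : (Fin (d + 1) → Fin n) → Fin m → ℝ) (t : Fin m → ℝ) (i : Fin (d + 1) → Fin n) : ℝ :=
  ∑ j, A i j * t j

/-- Contraction of `A` with `t` and with the vectors `z (k, ·)` in all indices but the first. -/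
def uvec (A : (Fin (d + 1) → Fin n) → Fin m → ℝ) (z : PIdx d × Fin n → ℝ) (t : Fin m → ℝ)
    (l : Fin n) : ℝ :=
  ∑ i : Fin (d + 1) → Fin n, if i 0 = l then (∏ k : PIdx d, z (k, i k.1)) * contr A t i else 0

/-- The family of vectors equal to `y` in the blocks of `I` and to `x` in the others. -/
def mix (I : Finset (PIdx d)) (x y : PIdx d × Fin n → ℝ) : PIdx d × Fin n → ℝ :=
  fun c => if c.1 ∈ I then y c else x c

variable (A : (Fin (d + 1) → Fin n) → Fin m → ℝ)

lemma inner_uvec (z : PIdx d × Fin n → ℝ) (t : Fin m → ℝ) (ω : Fin n → ℝ) :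
    ∑ l, ω l * uvec A z t l
      = ∑ i : Fin (d + 1) → Fin n, ω (i 0) * ((∏ k : PIdx d, z (k, i k.1)) * contr A t i) := by
  simp only [uvec, Finset.mul_sum]
  rw [Finset.sum_comm]
  refine Finset.sum_congr rfl fun i _ => ?_
  simp

lemma continuous_uvec (t : Fin m → ℝ) (l : Fin n) : Continuous fun z => uvec A z t l := by
  unfold uvec
  refine continuous_finsetSum _ fun i _ => ?_
  split_ifs <;> fun_prop

lemma abs_uvec_le {t : Fin m → ℝ} {M : ℝ} (hM : ∑ i, |contr A t i| ≤ M)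
    (z : PIdx d × Fin n → ℝ) (l : Fin n) :
    |uvec A z t l| ≤ M * Real.exp (∑ c, |z c|) := by
  unfold uvec
  refine (Finset.abs_sum_le_sum_abs _ _).trans ?_
  refine le_trans ?_ (mul_le_mul_of_nonneg_right hM (Real.exp_pos _).le)
  rw [Finset.sum_mul]
  refine Finset.sum_le_sum fun i _ => ?_
  split_ifs
  · rw [abs_mul, mul_comm]
    exact mul_le_mul_of_nonneg_left
      (abs_monomial_le Finset.univ (fun k : PIdx d => i k.1) z) (abs_nonneg _)
  · rw [abs_zero]; positivity

lemma abs_mix_le (I : Finset (PIdx d)) (x y : PIdx d × Fin n → ℝ) :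
    ∑ c, |mix I x y c| ≤ ∑ c, |y c| + ∑ c, |x c| := by
  rw [← Finset.sum_add_distrib]
  refine Finset.sum_le_sum fun c _ => ?_
  unfold mix
  split_ifs <;> linarith [abs_nonneg (x c), abs_nonneg (y c)]

lemma continuous_mix (I : Finset (PIdx d)) (x : PIdx d × Fin n → ℝ) :
    Continuous fun y => mix I x y := by
  refine continuous_pi fun c => ?_
  unfold mix
  split_ifs <;> fun_prop

lemma abs_uvec_mix_le {t : Fin m → ℝ} {M : ℝ} (hM : ∑ i, |contr A t i| ≤ M)
    (I : Finset (PIdx d)) (x y : PIdx d × Fin n → ℝ) (l : Fin n) :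
    |uvec A (mix I x y) t l| ≤ M * Real.exp (∑ c, |x c|) * Real.exp (1 * ∑ c, |y c|) := by
  refine (abs_uvec_le A hM _ l).trans ?_
  rw [mul_assoc, ← Real.exp_add]
  have hM0 : 0 ≤ M := (Finset.sum_nonneg fun _ _ => abs_nonneg _).trans hM
  refine mul_le_mul_of_nonneg_left (Real.exp_le_exp.2 ?_) hM0
  linarith [abs_mix_le I x y]

lemma prod_mix (I : Finset (PIdx d)) (x y : PIdx d × Fin n → ℝ) (i : Fin (d + 1) → Fin n) :
    ∏ k : PIdx d, mix I x y (k, i k.1)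
      = (∏ k ∈ I, y (k, i k.1)) * ∏ k ∈ Iᶜ, x (k, i k.1) := by
  have := Finset.prod_piecewise Finset.univ I (fun k : PIdx d => y (k, i k.1))
    (fun k => x (k, i k.1))
  rw [Finset.univ_inter, ← Finset.compl_eq_univ_sdiff] at this
  rw [← this]
  rfl

/-- Multilinear expansion. -/
lemma uvec_expand (s : ℝ) (x y : PIdx d × Fin n → ℝ) (t : Fin m → ℝ) (l : Fin n) :
    uvec A (fun c => s * y c + x c) t l
      = ∑ I : Finset (PIdx d), s ^ I.card * uvec A (mix I x y) t l := by
  simp only [uvec, Finset.mul_sum]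
  rw [Finset.sum_comm]
  refine Finset.sum_congr rfl fun i _ => ?_
  split_ifs with h
  · rw [Finset.prod_add, Finset.powerset_univ, Finset.sum_mul]
    refine Finset.sum_congr rfl fun I _ => ?_
    rw [prod_mix, Finset.prod_mul_distrib, Finset.prod_const, ← Finset.compl_eq_univ_sdiff]
    ring
  · simp

lemma integral_uvec_shift (s : ℝ) (v : PIdx d × Fin n → ℝ) (t : Fin m → ℝ) (l : Fin n) :
    ∫ y, uvec A (fun c => s * (y + v) c) t l ∂(_root_.stdGaussian (PIdx d × Fin n))
      = uvec A (fun c => s * v c) t l := by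
  simp only [uvec]
  have hmono : ∀ i : Fin (d + 1) → Fin n, Integrable
      (fun y : PIdx d × Fin n → ℝ => ∏ k : PIdx d, s * (y + v) (k, i k.1))
      (_root_.stdGaussian (PIdx d × Fin n)) := by
    intro i
    refine integrable_shift_of_exp_bound (F := fun z => ∏ k : PIdx d, s * z (k, i k.1))
      (by fun_prop) zero_le_one (abs_nonneg s) (fun z => ?_) v
    rw [one_mul]
    refine (abs_monomial_le Finset.univ (fun k : PIdx d => i k.1) (fun c => s * z c)).trans ?_
    simp [abs_mul, Finset.mul_sum]
  rw [integral_finsetSum]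
  · refine Finset.sum_congr rfl fun i _ => ?_
    split_ifs with h
    · rw [integral_mul_const]
      congr 1
      refine (integral_prod_section (fun k : PIdx d => i k.1)
        (f := fun k x => s * (x + v (k, i k.1))) (fun k => by fun_prop)).trans ?_
      refine Finset.prod_congr rfl fun k _ => ?_
      rw [integral_const_mul, integral_add integrable_id_gaussianReal_one (integrable_const _),
        integral_id_gaussianReal_zero]
      simp
    · simp
  · intro i _
    split_ifs
    · exact (hmono i).mul_const _
    · simp

/-- Weight of the multi-index `i` once the blocks outside `I` are contracted with `x`. -/
def coef (I : Finset (PIdx d)) (x : PIdx d × Fin n → ℝ) (t : Fin m → ℝ)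
    (i : Fin (d + 1) → Fin n) : ℝ :=
  (∏ k ∈ Iᶜ, x (k, i k.1)) * contr A t i

/-- The set of coordinates consisting of the first one and of those in `I`. -/
def blk (I : Finset (PIdx d)) : Finset (Fin (d + 1)) :=
  insert 0 (I.map (Function.Embedding.subtype _))

lemma uvec_mix (I : Finset (PIdx d)) (x y : PIdx d × Fin n → ℝ) (t : Fin m → ℝ) (l : Fin n) :
    uvec A (mix I x y) t l
      = ∑ i : Fin (d + 1) → Fin n, (if i 0 = l then coef A I x t i else 0)
        * ∏ k ∈ I, y (k, i k.1) := by
  unfold uvec coef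
  refine Finset.sum_congr rfl fun i _ => ?_
  rw [prod_mix]
  split_ifs <;> ring

lemma sum_sq_fiber {α β : Type*} [Fintype α] [Fintype β] [DecidableEq β] (f : α → β) (c : α → ℝ) :
    ∑ v, (∑ i, if f i = v then c i else 0) ^ 2
      = ∑ i, ∑ i', if f i = f i' then c i * c i' else 0 := by
  simp only [sq, Finset.sum_mul_sum]
  rw [Finset.sum_comm]
  refine Finset.sum_congr rfl fun i _ => ?_
  rw [Finset.sum_comm]
  refine Finset.sum_congr rfl fun i' _ => ?_
  simp only [ite_mul, zero_mul, mul_ite, mul_zero]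
  rw [Finset.sum_ite_eq]
  simp

lemma restrict_blk_eq_iff (I : Finset (PIdx d)) (i i' : Fin (d + 1) → Fin n) :
    ((fun l : {l // l ∈ blk I} => i l.1) = fun l => i' l.1)
      ↔ i 0 = i' 0 ∧ ∀ k ∈ I, i k.1 = i' k.1 := by
  constructor
  · intro h
    refine ⟨congrFun h ⟨0, Finset.mem_insert_self _ _⟩, fun k hk => ?_⟩
    exact congrFun h ⟨k.1, Finset.mem_insert_of_mem (Finset.mem_map_of_mem _ hk)⟩
  · rintro ⟨h0, h1⟩
    ext1 ⟨l, hl⟩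
    rcases Finset.mem_insert.1 hl with rfl | hl
    · exact h0
    · obtain ⟨k, hk, rfl⟩ := Finset.mem_map.1 hl
      exact h1 k hk

/-- Second moment of the randomised contraction: the squared Hilbert–Schmidt norm of the weights
summed over the coordinates outside `blk I`. -/
lemma integral_sum_uvec_mix_sq (I : Finset (PIdx d)) (x : PIdx d × Fin n → ℝ) (t : Fin m → ℝ) :
    ∑ l, ∫ y, uvec A (mix I x y) t l ^ 2 ∂(_root_.stdGaussian (PIdx d × Fin n))
      = ∑ v : {l // l ∈ blk I} → Fin n,
        (∑ i : Fin (d + 1) → Fin n, if (fun l => i l.1) = v then coef A I x t i else 0) ^ 2 := by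
  refine Eq.trans ?_ (sum_sq_fiber (fun (i : Fin (d + 1) → Fin n) (l : {l // l ∈ blk I}) => i l.1)
    (coef A I x t)).symm
  simp_rw [uvec_mix]
  simp_rw [fun l => integral_form_sq I (fun (i : Fin (d + 1) → Fin n) (k : PIdx d) => i k.1)
    (fun i => if i 0 = l then coef A I x t i else 0)]
  rw [Finset.sum_comm]
  refine Finset.sum_congr rfl fun i _ => ?_
  rw [Finset.sum_comm]
  refine Finset.sum_congr rfl fun i' _ => ?_
  simp only [restrict_blk_eq_iff]
  by_cases h : ∀ k ∈ I, i k.1 = i' k.1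
  · have h0 : (i 0 = i' 0 ∧ ∀ k ∈ I, i k.1 = i' k.1) ↔ i 0 = i' 0 := and_iff_left h
    simp only [if_pos h, h0, ite_mul, zero_mul, mul_ite, mul_zero]
    rw [Finset.sum_ite_eq]
    simp
  · have h0 : ¬(i 0 = i' 0 ∧ ∀ k ∈ I, i k.1 = i' k.1) := fun hc => h hc.2
    simp only [if_neg h, if_neg h0, Finset.sum_const_zero]

end ArrayForm


/-! ### Lower bounds for the mixed norms -/

section ChaosNorm

variable {n m d : ℕ} (A : (Fin (d + 1) → Fin n) → Fin m → ℝ) (T : Set (Fin m → ℝ))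

/-- Supremum over `T` of the contraction of `A` with the weights `f`. -/
noncomputable def supT (f : (Fin (d + 1) → Fin n) → ℝ) : ℝ :=
  sSup { s : ℝ | ∃ t ∈ T, s = ∑ i, f i * contr A t i }

lemma chaosNormT_eq (P' P : Finset (Finset (Fin (d + 1)))) :
    chaosNormT A T P' P = sSup { r : ℝ | ∃ x : (I : Finset (Fin (d + 1))) →
      ({l // l ∈ I} → Fin n) → ℝ, (∀ I ∈ P, ∑ v : {l // l ∈ I} → Fin n, x I v ^ 2 ≤ 1) ∧
      r = ∫ ω : GIdx (d + 1) n → ℝ, supT A T (fun i => (∏ I ∈ P, x I fun l => i l.1) *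
        (∏ J ∈ P', ω ⟨J, fun l => i l.1⟩)) ∂ _root_.stdGaussian (GIdx (d + 1) n) } := by
  simp only [chaosNormT, supT, contr, Finset.mul_sum, mul_assoc]

variable {A T} {M : ℝ}

lemma abs_weighted_sum_le (hM : ∀ t ∈ T, ∑ i, |contr A t i| ≤ M) {f : (Fin (d + 1) → Fin n) → ℝ}
    {B : ℝ} (hB0 : 0 ≤ B) (hB : ∀ i, |f i| ≤ B) {t : Fin m → ℝ} (ht : t ∈ T) :
    ∑ i, f i * contr A t i ≤ B * M := by
  refine le_trans ?_ (mul_le_mul_of_nonneg_left (hM t ht) hB0)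
  rw [Finset.mul_sum]
  refine Finset.sum_le_sum fun i _ => (le_abs_self _).trans ?_
  rw [abs_mul]
  exact mul_le_mul_of_nonneg_right (hB i) (abs_nonneg _)

lemma supT_bdd (hM : ∀ t ∈ T, ∑ i, |contr A t i| ≤ M) (f : (Fin (d + 1) → Fin n) → ℝ) :
    BddAbove { s : ℝ | ∃ t ∈ T, s = ∑ i, f i * contr A t i } := by
  refine ⟨(∑ i, |f i|) * M, ?_⟩
  rintro _ ⟨t, ht, rfl⟩
  exact abs_weighted_sum_le hM (Finset.sum_nonneg fun _ _ => abs_nonneg _)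
    (fun i => Finset.single_le_sum (f := fun i => |f i|) (fun _ _ => abs_nonneg _)
      (Finset.mem_univ i)) ht

lemma le_supT (hM : ∀ t ∈ T, ∑ i, |contr A t i| ≤ M) (f : (Fin (d + 1) → Fin n) → ℝ)
    {t : Fin m → ℝ} (ht : t ∈ T) : ∑ i, f i * contr A t i ≤ supT A T f :=
  le_csSup (supT_bdd hM f) ⟨t, ht, rfl⟩

lemma supT_le (hT : T.Nonempty) (hM : ∀ t ∈ T, ∑ i, |contr A t i| ≤ M)
    {f : (Fin (d + 1) → Fin n) → ℝ}
    {B : ℝ} (hB0 : 0 ≤ B) (hB : ∀ i, |f i| ≤ B) : supT A T f ≤ B * M := by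
  obtain ⟨t, ht⟩ := hT
  refine csSup_le ⟨_, t, ht, rfl⟩ ?_
  rintro _ ⟨t, ht, rfl⟩
  exact abs_weighted_sum_le hM hB0 hB ht

lemma contr_neg (t : Fin m → ℝ) (i : Fin (d + 1) → Fin n) : contr A (-t) i = - contr A t i := by
  simp [contr]

lemma supT_nonneg (hT : T.Nonempty) (hs : T = -T) (hM : ∀ t ∈ T, ∑ i, |contr A t i| ≤ M)
    (f : (Fin (d + 1) → Fin n) → ℝ) : 0 ≤ supT A T f := by
  obtain ⟨t, ht⟩ := hT
  have ht' : -t ∈ T := by rw [hs]; simpa using ht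
  have h1 := le_supT hM f ht
  have h2 := le_supT hM f ht'
  simp only [contr_neg, mul_neg, Finset.sum_neg_distrib] at h2
  linarith

lemma abs_gaussian_weight_le {P P' : Finset (Finset (Fin (d + 1)))}
    {x : (I : Finset (Fin (d + 1))) → ({l // l ∈ I} → Fin n) → ℝ}
    (hx : ∀ I ∈ P, ∑ v : {l // l ∈ I} → Fin n, x I v ^ 2 ≤ 1)
    (ω : GIdx (d + 1) n → ℝ) (i : Fin (d + 1) → Fin n) :
    |(∏ I ∈ P, x I fun l => i l.1) * (∏ J ∈ P', ω ⟨J, fun l => i l.1⟩)|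
      ≤ Real.exp (∑ c, |ω c|) := by
  have h1 : |∏ I ∈ P, x I fun l => i l.1| ≤ 1 := by
    rw [Finset.abs_prod]
    refine Finset.prod_le_one (fun _ _ => abs_nonneg _) fun I hI => ?_
    refine abs_le_one_iff_mul_self_le_one.2 ?_
    rw [← sq]
    exact (Finset.single_le_sum (f := fun v => x I v ^ 2) (fun _ _ => sq_nonneg _)
      (Finset.mem_univ fun l => i l.1)).trans (hx I hI)
  have h2 : |∏ J ∈ P', ω ⟨J, fun l => i l.1⟩| ≤ Real.exp (∑ c, |ω c|) := by
    refine (prod_abs_le_exp P' _).trans (Real.exp_le_exp.2 ?_)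
    rw [← Finset.sum_image (s := P')
      (g := fun J => (⟨J, fun l => i l.1⟩ : GIdx (d + 1) n)) (f := fun c => |ω c|)
      (fun a _ b _ hab => (Sigma.mk.inj_iff.1 hab).1)]
    exact Finset.sum_le_sum_of_subset_of_nonneg (Finset.subset_univ _) fun _ _ _ => abs_nonneg _
  rw [abs_mul]
  calc _ ≤ 1 * Real.exp (∑ c, |ω c|) := mul_le_mul h1 h2 (abs_nonneg _) zero_le_one
    _ = _ := one_mul _

lemma chaos_bdd (hT : T.Nonempty) (hs : T = -T) (hM : ∀ t ∈ T, ∑ i, |contr A t i| ≤ M)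
    (P' P : Finset (Finset (Fin (d + 1)))) :
    BddAbove { r : ℝ | ∃ x : (I : Finset (Fin (d + 1))) →
      ({l // l ∈ I} → Fin n) → ℝ, (∀ I ∈ P, ∑ v : {l // l ∈ I} → Fin n, x I v ^ 2 ≤ 1) ∧
      r = ∫ ω : GIdx (d + 1) n → ℝ, supT A T (fun i => (∏ I ∈ P, x I fun l => i l.1) *
        (∏ J ∈ P', ω ⟨J, fun l => i l.1⟩)) ∂ _root_.stdGaussian (GIdx (d + 1) n) } := by
  refine ⟨∫ ω, Real.exp (1 * ∑ c, |ω c|) * M ∂ _root_.stdGaussian (GIdx (d + 1) n), ?_⟩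
  rintro _ ⟨x, hx, rfl⟩
  refine integral_mono_of_nonneg (Filter.Eventually.of_forall fun ω => supT_nonneg hT hs hM _)
    ((integrable_exp_sum_abs _ 1).mul_const M) (Filter.Eventually.of_forall fun ω => ?_)
  simp only [one_mul]
  exact supT_le hT hM (Real.exp_pos _).le fun i => abs_gaussian_weight_le hx ω i

lemma le_chaosNormT (hT : T.Nonempty) (hs : T = -T) (hM : ∀ t ∈ T, ∑ i, |contr A t i| ≤ M)
    {P' P : Finset (Finset (Fin (d + 1)))}
    (x : (I : Finset (Fin (d + 1))) → ({l // l ∈ I} → Fin n) → ℝ)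
    (hx : ∀ I ∈ P, ∑ v : {l // l ∈ I} → Fin n, x I v ^ 2 ≤ 1) :
    ∫ ω : GIdx (d + 1) n → ℝ, supT A T (fun i => (∏ I ∈ P, x I fun l => i l.1) *
        (∏ J ∈ P', ω ⟨J, fun l => i l.1⟩)) ∂ _root_.stdGaussian (GIdx (d + 1) n)
      ≤ chaosNormT A T P' P := by
  rw [chaosNormT_eq]
  exact le_csSup (chaos_bdd hT hs hM P' P) ⟨x, hx, rfl⟩

lemma chaosNormT_nonneg (hT : T.Nonempty) (hs : T = -T)
    (hM : ∀ t ∈ T, ∑ i, |contr A t i| ≤ M) (P' P : Finset (Finset (Fin (d + 1)))) :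
    0 ≤ chaosNormT A T P' P := by
  rw [chaosNormT_eq]
  refine Real.sSup_nonneg ?_
  rintro _ ⟨x, -, rfl⟩
  exact integral_nonneg fun ω => supT_nonneg hT hs hM _

/-- Each mixed norm is one of the summands on the right-hand side of the main inequality. -/
lemma chaosNormT_le_sum (hT : T.Nonempty) (hs : T = -T)
    (hM : ∀ t ∈ T, ∑ i, |contr A t i| ≤ M) {P' P : Finset (Finset (Fin (d + 1)))}
    (hP : IsPartitionPair Finset.univ P P') {k : ℕ} (hk : P.card = k) (hkd : k < d + 2)
    {p : ℝ} (hp : 0 < p) :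
    p ^ (((k : ℝ) + 1 - (d + 1)) / 2) * chaosNormT A T P' P
      ≤ ∑ k ∈ Finset.range (d + 2), p ^ (((k : ℝ) + 1 - (d + 1)) / 2) * sNorm A T k := by
  have h0 : ∀ k, 0 ≤ sNorm A T k := fun k =>
    Finset.sum_nonneg fun PP _ => chaosNormT_nonneg hT hs hM _ _
  have h1 : chaosNormT A T P' P ≤ sNorm A T k :=
    Finset.single_le_sum (f := fun PP : Finset (Finset (Fin (d + 1))) ×
      Finset (Finset (Fin (d + 1))) => chaosNormT A T PP.2 PP.1) (a := (P, P'))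
      (fun PP _ => chaosNormT_nonneg hT hs hM _ _) (by simp [hP, hk])
  refine (mul_le_mul_of_nonneg_left h1 (Real.rpow_nonneg hp.le _)).trans ?_
  exact Finset.single_le_sum
    (f := fun k : ℕ => p ^ (((k : ℝ) + 1 - (d + 1)) / 2) * sNorm A T k)
    (fun k _ => mul_nonneg (Real.rpow_nonneg hp.le _) (h0 k)) (Finset.mem_range.2 hkd)

/-- The partition of `S` into singletons. -/
def sing (S : Finset (Fin (d + 1))) : Finset (Finset (Fin (d + 1))) :=
  S.map ⟨fun a => {a}, Finset.singleton_injective⟩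

lemma mem_sing {S I : Finset (Fin (d + 1))} : I ∈ sing S ↔ ∃ a ∈ S, {a} = I := by
  simp [sing]

lemma card_sing (S : Finset (Fin (d + 1))) : (sing S).card = S.card := Finset.card_map _

lemma isPartitionPair_sing (J : Finset (Fin (d + 1))) :
    IsPartitionPair Finset.univ (sing Jᶜ) (sing J) := by
  refine ⟨?_, ?_, ?_, ?_⟩
  · rw [Finset.disjoint_left]
    rintro _ h1 h2
    obtain ⟨a, ha, rfl⟩ := mem_sing.1 h1
    obtain ⟨b, hb, hab⟩ := mem_sing.1 h2
    rw [Finset.singleton_injective hab] at hb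
    exact (Finset.mem_compl.1 ha) hb
  · intro I hI
    rcases Finset.mem_union.1 hI with h | h <;> obtain ⟨a, _, rfl⟩ := mem_sing.1 h <;>
      exact Finset.singleton_nonempty a
  · intro I hI I' hI' hne
    have h1 : ∃ a, {a} = I := by
      rcases Finset.mem_union.1 hI with h | h <;> obtain ⟨a, _, rfl⟩ := mem_sing.1 h <;>
        exact ⟨a, rfl⟩
    have h2 : ∃ a, {a} = I' := by
      rcases Finset.mem_union.1 hI' with h | h <;> obtain ⟨a, _, rfl⟩ := mem_sing.1 h <;>
        exact ⟨a, rfl⟩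
    obtain ⟨a, rfl⟩ := h1
    obtain ⟨b, rfl⟩ := h2
    rw [Finset.disjoint_singleton]
    rintro rfl
    exact hne rfl
  · refine Finset.eq_univ_of_forall fun a => Finset.mem_sup.2 ⟨{a}, ?_, Finset.mem_singleton_self a⟩
    by_cases h : a ∈ J
    · exact Finset.mem_union_right _ (mem_sing.2 ⟨a, h, rfl⟩)
    · exact Finset.mem_union_left _ (mem_sing.2 ⟨a, Finset.mem_compl.2 h, rfl⟩)

lemma notMem_sing_compl {J : Finset (Fin (d + 1))} (hJ : J.Nonempty) : J ∉ sing Jᶜ := by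
  intro h
  obtain ⟨a, ha, rfl⟩ := mem_sing.1 h
  exact Finset.mem_compl.1 ha (Finset.mem_singleton_self a)

lemma isPartitionPair_insert {J : Finset (Fin (d + 1))} (hJ : J.Nonempty) :
    IsPartitionPair Finset.univ (insert J (sing Jᶜ)) ∅ := by
  refine ⟨Finset.disjoint_empty_right _, ?_, ?_, ?_⟩
  · intro I hI
    rw [Finset.union_empty] at hI
    rcases Finset.mem_insert.1 hI with rfl | h
    · exact hJ
    · obtain ⟨a, _, rfl⟩ := mem_sing.1 h
      exact Finset.singleton_nonempty a
  · intro I hI I' hI' hne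
    rw [Finset.union_empty] at hI hI'
    rcases Finset.mem_insert.1 hI with rfl | h <;> rcases Finset.mem_insert.1 hI' with rfl | h'
    · exact absurd rfl hne
    · obtain ⟨a, ha, rfl⟩ := mem_sing.1 h'
      exact Finset.disjoint_singleton_right.2 (Finset.mem_compl.1 ha)
    · obtain ⟨a, ha, rfl⟩ := mem_sing.1 h
      exact Finset.disjoint_singleton_left.2 (Finset.mem_compl.1 ha)
    · obtain ⟨a, _, rfl⟩ := mem_sing.1 h
      obtain ⟨b, _, rfl⟩ := mem_sing.1 h'
      rw [Finset.disjoint_singleton]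
      rintro rfl
      exact hne rfl
  · rw [Finset.union_empty]
    refine Finset.eq_univ_of_forall fun a => Finset.mem_sup.2 ?_
    by_cases h : a ∈ J
    · exact ⟨J, Finset.mem_insert_self _ _, h⟩
    · exact ⟨{a}, Finset.mem_insert_of_mem (mem_sing.2 ⟨a, Finset.mem_compl.2 h, rfl⟩),
        Finset.mem_singleton_self a⟩

lemma blk_compl (I : Finset (PIdx d)) :
    (blk I)ᶜ = Iᶜ.map (Function.Embedding.subtype _) := by
  ext a
  by_cases h : a = 0 <;> simp [blk, h]

lemma card_blk (I : Finset (PIdx d)) : (blk I).card = I.card + 1 := by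
  rw [blk, Finset.card_insert_of_notMem (by simp), Finset.card_map]

/-- Extension of the vectors `x (k, ·)`, attached to the singletons `{k}`, to a family of arrays
indexed by all blocks; the values at other blocks are irrelevant. -/
noncomputable def singArr (x : PIdx d × Fin n → ℝ) (I : Finset (Fin (d + 1)))
    (v : {l // l ∈ I} → Fin n) : ℝ :=
  if h : ∃ k : PIdx d, k.1 ∈ I then x (h.choose, v ⟨h.choose.1, h.choose_spec⟩) else 0

lemma singArr_singleton (x : PIdx d × Fin n → ℝ) (k : PIdx d)
    (v : {l // l ∈ ({k.1} : Finset (Fin (d + 1)))} → Fin n) :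
    singArr x {k.1} v = x (k, v ⟨k.1, Finset.mem_singleton_self _⟩) := by
  have h : ∃ k' : PIdx d, k'.1 ∈ ({k.1} : Finset (Fin (d + 1))) :=
    ⟨k, Finset.mem_singleton_self _⟩
  have hk : h.choose.1 = k.1 := Finset.mem_singleton.1 h.choose_spec
  rw [singArr, dif_pos h]
  exact congrArg x (Prod.ext (Subtype.ext hk) (congrArg v (Subtype.ext hk)))

lemma sum_singArr_sq (x : PIdx d × Fin n → ℝ) (k : PIdx d) :
    ∑ v : {l // l ∈ ({k.1} : Finset (Fin (d + 1)))} → Fin n, singArr x {k.1} v ^ 2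
      = ∑ l, x (k, l) ^ 2 := by
  simp_rw [singArr_singleton]
  let e : ({l // l ∈ ({k.1} : Finset (Fin (d + 1)))} → Fin n) ≃ Fin n :=
    { toFun := fun v => v ⟨k.1, Finset.mem_singleton_self _⟩
      invFun := fun l _ => l
      left_inv := fun v => by
        ext1 l
        exact congrArg v (Subtype.ext (Finset.mem_singleton.1 l.2).symm)
      right_inv := fun l => rfl }
  exact Fintype.sum_equiv e _ _ fun v => rfl

lemma prod_singArr (x : PIdx d × Fin n → ℝ) (I : Finset (PIdx d)) (i : Fin (d + 1) → Fin n) :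
    ∏ I' ∈ sing (blk I)ᶜ, singArr x I' (fun l => i l.1) = ∏ k ∈ Iᶜ, x (k, i k.1) := by
  rw [sing, blk_compl, Finset.prod_map, Finset.prod_map]
  exact Finset.prod_congr rfl fun k _ => singArr_singleton x k _

lemma singArr_admissible {x : PIdx d × Fin n → ℝ} (hx : ∀ k, ∑ l, x (k, l) ^ 2 ≤ 1)
    (I : Finset (PIdx d)) : ∀ I' ∈ sing (blk I)ᶜ,
      ∑ v : {l // l ∈ I'} → Fin n, singArr x I' v ^ 2 ≤ 1 := by
  intro I' hI'
  rw [blk_compl] at hI'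
  obtain ⟨a, ha, rfl⟩ := mem_sing.1 hI'
  obtain ⟨k, _, rfl⟩ := Finset.mem_map.1 ha
  exact (sum_singArr_sq x k).le.trans (hx k)

/-- The Hilbert–Schmidt norm produced by the second moment is at most a deterministic mixed norm:
the extremal array on the block `blk I` is the normalised array of partial sums. -/
lemma sqrt_sum_sq_le_chaos (hT : T.Nonempty) (hs : T = -T)
    (hM : ∀ t ∈ T, ∑ i, |contr A t i| ≤ M) {x : PIdx d × Fin n → ℝ}
    (hx : ∀ k, ∑ l, x (k, l) ^ 2 ≤ 1) (I : Finset (PIdx d)) {t : Fin m → ℝ} (ht : t ∈ T) :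
    Real.sqrt (∑ v : {l // l ∈ blk I} → Fin n,
        (∑ i : Fin (d + 1) → Fin n, if (fun l => i l.1) = v then coef A I x t i else 0) ^ 2)
      ≤ chaosNormT A T ∅ (insert (blk I) (sing (blk I)ᶜ)) := by
  set b : (I' : Finset (Fin (d + 1))) → ({l // l ∈ I'} → Fin n) → ℝ := fun I' v =>
    ∑ i : Fin (d + 1) → Fin n, if (fun l => i l.1) = v then coef A I x t i else 0 with hb
  set N := Real.sqrt (∑ v : {l // l ∈ blk I} → Fin n, b (blk I) v ^ 2) with hN
  change N ≤ _
  have hN2 : N ^ 2 = ∑ v : {l // l ∈ blk I} → Fin n, b (blk I) v ^ 2 :=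
    Real.sq_sqrt (Finset.sum_nonneg fun _ _ => sq_nonneg _)
  rcases eq_or_ne N 0 with h0 | h0
  · rw [h0]; exact chaosNormT_nonneg hT hs hM _ _
  let X : (I' : Finset (Fin (d + 1))) → ({l // l ∈ I'} → Fin n) → ℝ := fun I' v =>
    if I' = blk I then b I' v / N else singArr x I' v
  have hne : (blk I).Nonempty := ⟨0, Finset.mem_insert_self _ _⟩
  have hXb : ∀ v, X (blk I) v = b (blk I) v / N := fun v => if_pos rfl
  have hXs : ∀ I' ∈ sing (blk I)ᶜ, ∀ v, X I' v = singArr x I' v := fun I' hI' v =>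
    if_neg fun h : I' = blk I => notMem_sing_compl hne (by rwa [h] at hI')
  have hX : ∀ I' ∈ insert (blk I) (sing (blk I)ᶜ),
      ∑ v : {l // l ∈ I'} → Fin n, X I' v ^ 2 ≤ 1 := by
    intro I' hI'
    rcases Finset.mem_insert.1 hI' with rfl | h
    · simp_rw [hXb, div_pow]
      rw [← Finset.sum_div, ← hN2, div_self (pow_ne_zero 2 h0)]
    · simp_rw [hXs I' h]
      exact singArr_admissible hx I I' h
  refine le_trans ?_ (le_chaosNormT hT hs hM X hX)
  simp only [Finset.prod_empty, mul_one, integral_const, probReal_univ, one_smul]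
  refine le_trans (le_of_eq ?_) (le_supT hM _ ht)
  have h1 : ∀ i : Fin (d + 1) → Fin n,
      (∏ I' ∈ insert (blk I) (sing (blk I)ᶜ), X I' fun l => i l.1) * contr A t i
        = b (blk I) (fun l => i l.1) / N * coef A I x t i := by
    intro i
    rw [Finset.prod_insert (notMem_sing_compl hne), hXb,
      Finset.prod_congr rfl fun I' hI' => hXs I' hI' _, prod_singArr, coef, mul_assoc]
  simp_rw [h1]
  have h2 : ∑ i, b (blk I) (fun l => i l.1) / N * coef A I x t i
      = (∑ v, b (blk I) v ^ 2) / N := by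
    have h3 : ∀ v, b (blk I) v ^ 2
        = ∑ i : Fin (d + 1) → Fin n, if (fun l => i l.1) = v then b (blk I) v * coef A I x t i
          else 0 := by
      intro v
      rw [sq]
      conv_lhs => rw [hb]
      simp only
      rw [Finset.mul_sum]
      exact Finset.sum_congr rfl fun i _ => by split_ifs <;> simp [hb]
    simp_rw [h3]
    rw [Finset.sum_comm, Finset.sum_div]
    refine Finset.sum_congr rfl fun i _ => ?_
    rw [Finset.sum_ite_eq]
    simp only [Finset.mem_univ, if_true]
    ring
  rw [h2, ← hN2]
  field_simp

end ChaosNorm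


/-! ### Assembling the estimate -/

section Assembly

-- Shortcuts: on a concrete index type the instance search for `SFinite` takes a detour through
-- regularity and exceeds the size limit.
instance stdGaussian_isFinite (ι : Type*) [Fintype ι] :
    IsFiniteMeasure (_root_.stdGaussian ι) :=
  inferInstance

instance stdGaussian_sFinite (ι : Type*) [Fintype ι] : SFinite (_root_.stdGaussian ι) :=
  inferInstance

variable {n m d : ℕ} {A : (Fin (d + 1) → Fin n) → Fin m → ℝ} {T : Set (Fin m → ℝ)} {M : ℝ}

/-- The index of the Gaussian attached to the singleton block `{a}` and to the value `l`. -/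
def sgl (a : Fin (d + 1)) (l : Fin n) : GIdx (d + 1) n := ⟨{a}, fun _ => l⟩

lemma sgl_inj {a b : Fin (d + 1)} {l l' : Fin n} (h : sgl a l = sgl b l') : a = b ∧ l = l' := by
  have h1 : a = b := Finset.singleton_injective (Sigma.mk.inj_iff.1 h).1
  subst h1
  exact ⟨rfl, congrFun (eq_of_heq (Sigma.mk.inj_iff.1 h).2) ⟨a, Finset.mem_singleton_self a⟩⟩

lemma mk_singleton_eq_sgl (a : Fin (d + 1)) (i : Fin (d + 1) → Fin n) :
    (⟨{a}, fun l => i l.1⟩ : GIdx (d + 1) n) = sgl a (i a) := by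
  unfold sgl
  congr 1
  ext1 l
  rw [Finset.mem_singleton.1 l.2]

/-- Gaussians attached to distinct singleton blocks are independent standard Gaussian vectors. -/
lemma measurePreserving_blocks :
    MeasurePreserving (fun g : GIdx (d + 1) n → ℝ =>
      ((fun c : PIdx d × Fin n => g (sgl c.1.1 c.2)), fun l : Fin n => g (sgl 0 l)))
      (_root_.stdGaussian (GIdx (d + 1) n))
      ((_root_.stdGaussian (PIdx d × Fin n)).prod (_root_.stdGaussian (Fin n))) := by
  let e : (PIdx d × Fin n) ⊕ Fin n → GIdx (d + 1) n :=
    Sum.elim (fun c => sgl c.1.1 c.2) (fun l => sgl 0 l)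
  have he : Function.Injective e := by
    rintro (c | l) (c' | l') h
    · obtain ⟨h1, h2⟩ := sgl_inj h
      exact congrArg Sum.inl (Prod.ext (Subtype.ext h1) h2)
    · exact absurd (sgl_inj h).1 c.1.2
    · exact absurd (sgl_inj h).1.symm c'.1.2
    · exact congrArg Sum.inr (sgl_inj h).2
  exact (measurePreserving_sumPiEquivProdPi
    (fun _ : (PIdx d × Fin n) ⊕ Fin n => gaussianReal 0 1)).comp (measurePreserving_reindex e he)

lemma penSup_uvec_eq_supT (z : PIdx d × Fin n → ℝ) (ω : Fin n → ℝ) :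
    penSup (fun (t : T) l => uvec A z t l) 0 ω
      = supT A T (fun i => ω (i 0) * ∏ k : PIdx d, z (k, i k.1)) := by
  unfold penSup supT
  simp only [zero_mul, sub_zero, inner_uvec, mul_assoc]
  rw [iSup]
  congr 1
  ext s
  simp [eq_comm]

lemma integral_blocks {Φ : (PIdx d × Fin n → ℝ) × (Fin n → ℝ) → ℝ} (hm : Measurable Φ)
    (hi : Integrable Φ ((_root_.stdGaussian (PIdx d × Fin n)).prod
      (_root_.stdGaussian (Fin n)))) :
    ∫ y, ∫ ω, Φ (y, ω) ∂(_root_.stdGaussian (Fin n)) ∂(_root_.stdGaussian (PIdx d × Fin n))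
      = ∫ g : GIdx (d + 1) n → ℝ, Φ ((fun c => g (sgl c.1.1 c.2)), fun l => g (sgl 0 l))
          ∂(_root_.stdGaussian (GIdx (d + 1) n)) := by
  rw [← integral_prod Φ hi, ← measurePreserving_blocks.map_eq,
    integral_map measurePreserving_blocks.measurable.aemeasurable hm.aestronglyMeasurable]

lemma measurable_penSup_swap {κ ι τ : Type*} [Fintype κ] [Fintype ι] [Nonempty τ]
    {U : (κ → ℝ) → τ → ι → ℝ} (hc : ∀ t l, Continuous fun z => U z t l) {b : (κ → ℝ) → ℝ}
    (hb : ∀ z t l, |U z t l| ≤ b z) :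
    Measurable fun w : (κ → ℝ) × (ι → ℝ) => penSup (U w.1) 0 w.2 := by
  have h := (measurable_penSup_joint hc hb (le_refl (0 : ℝ))).comp
    (measurable_swap (α := κ → ℝ) (β := ι → ℝ))
  exact h

lemma integrable_penSup_swap {κ ι τ : Type*} [Fintype κ] [Fintype ι] [Nonempty τ]
    {U : (κ → ℝ) → τ → ι → ℝ} (hc : ∀ t l, Continuous fun z => U z t l) {B : ℝ}
    (hb : ∀ z t l, |U z t l| ≤ B * Real.exp (1 * ∑ c, |z c|)) :
    Integrable (fun w : (κ → ℝ) × (ι → ℝ) => penSup (U w.1) 0 w.2)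
      ((_root_.stdGaussian κ).prod (_root_.stdGaussian ι)) := by
  have h1 := ((integrable_exp_sum_abs κ 1).const_mul B).mul_prod (integrable_sum_abs (ι := ι))
  refine h1.mono' (measurable_penSup_swap hc hb).aestronglyMeasurable
    (Filter.Eventually.of_forall fun w => ?_)
  have := abs_penSup_le (hb w.1) (le_refl (0 : ℝ)) w.2
  rw [Real.norm_eq_abs]
  simpa using this

/-- The expected supremum of the randomised process is one of the mixed norms. -/
lemma integral_penSup_mix_le (hT : T.Nonempty) (hs : T = -T)
    (hM : ∀ t ∈ T, ∑ i, |contr A t i| ≤ M) {x : PIdx d × Fin n → ℝ}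
    (hx : ∀ k, ∑ l, x (k, l) ^ 2 ≤ 1) (I : Finset (PIdx d)) :
    ∫ y, ∫ ω, penSup (fun (t : T) l => uvec A (mix I x y) t l) 0 ω ∂(_root_.stdGaussian (Fin n))
        ∂(_root_.stdGaussian (PIdx d × Fin n))
      ≤ chaosNormT A T (sing (blk I)) (sing (blk I)ᶜ) := by
  have : Nonempty T := hT.to_subtype
  have hc : ∀ (t : T) l, Continuous fun y => uvec A (mix I x y) t l :=
    fun t l => (continuous_uvec A t l).comp (continuous_mix I x)
  have hb : ∀ y (t : T) l, |uvec A (mix I x y) t l|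
      ≤ M * Real.exp (∑ c, |x c|) * Real.exp (1 * ∑ c, |y c|) :=
    fun y t l => abs_uvec_mix_le A (hM t t.2) I x y l
  have h1 := measurable_penSup_swap hc hb
  have h2 := integrable_penSup_swap hc hb
  have key := integral_blocks h1 h2
  rw [key]
  have h3 := le_chaosNormT (P' := sing (blk I)) hT hs hM (singArr x) (singArr_admissible hx I)
  refine le_trans (le_of_eq ?_) h3
  refine integral_congr_ae (Filter.Eventually.of_forall fun g => ?_)
  change penSup (fun (t : T) l => uvec A (mix I x fun c => g (sgl c.1.1 c.2)) t l) 0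
    (fun l => g (sgl 0 l)) = _
  rw [penSup_uvec_eq_supT]
  congr 1
  ext1 i
  rw [prod_singArr, prod_mix]
  have h4 : ∏ J ∈ sing (blk I), g ⟨J, fun l => i l.1⟩
      = g (sgl 0 (i 0)) * ∏ k ∈ I, g (sgl k.1 (i k.1)) := by
    rw [sing, Finset.prod_map, blk, Finset.prod_insert (by simp), Finset.prod_map]
    simp only [Function.Embedding.coeFn_mk, Function.Embedding.subtype_apply, mk_singleton_eq_sgl]
  rw [h4]
  ring

lemma penSup_add_le {ι τ : Type*} [Fintype ι] [Nonempty τ] {α : Type*} (S : Finset α)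
    (w : α → ℝ) (hw : ∀ a ∈ S, 0 ≤ w a) (u : α → τ → ι → ℝ) (B : α → ℝ)
    (hB : ∀ a t l, |u a t l| ≤ B a) (g : ι → ℝ) :
    penSup (fun t l => ∑ a ∈ S, w a * u a t l) 0 g ≤ ∑ a ∈ S, w a * penSup (u a) 0 g := by
  refine ciSup_le fun t => ?_
  rw [zero_mul, sub_zero]
  calc ∑ l, g l * ∑ a ∈ S, w a * u a t l = ∑ a ∈ S, w a * ∑ l, g l * u a t l := by
        simp only [Finset.mul_sum]
        rw [Finset.sum_comm]
        exact Finset.sum_congr rfl fun a _ => Finset.sum_congr rfl fun l _ => by ring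
    _ ≤ _ := by
        refine Finset.sum_le_sum fun a ha => mul_le_mul_of_nonneg_left ?_ (hw a ha)
        have := le_ciSup (pen_bdd (hB a) (le_refl (0 : ℝ)) g) t
        simpa [penSup] using this

end Assembly


section Final

variable {n m d : ℕ} {A : (Fin (d + 1) → Fin n) → Fin m → ℝ} {T : Set (Fin m → ℝ)} {M : ℝ}

/-- The right-hand side of the estimate, without the constant. -/
noncomputable def rhsSum (A : (Fin (d + 1) → Fin n) → Fin m → ℝ) (T : Set (Fin m → ℝ))
    (p : ℝ) : ℝ :=
  ∑ k ∈ Finset.range (d + 2), p ^ (((k : ℝ) + 1 - (d + 1)) / 2) * sNorm A T k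

lemma rhsSum_nonneg (hT : T.Nonempty) (hs : T = -T)
    (hM : ∀ t ∈ T, ∑ i, |contr A t i| ≤ M) {p : ℝ} (hp : 0 < p) : 0 ≤ rhsSum A T p :=
  Finset.sum_nonneg fun _ _ => mul_nonneg (Real.rpow_nonneg hp.le _)
    (Finset.sum_nonneg fun _ _ => chaosNormT_nonneg hT hs hM _ _)

lemma rpow_exponent {p : ℝ} (hp : 0 < p) (i : ℕ) :
    p ^ ((1 - (i : ℝ)) / 2) = Real.sqrt p * (Real.sqrt p)⁻¹ ^ i := by
  rw [Real.sqrt_eq_rpow, ← Real.rpow_neg hp.le, ← Real.rpow_natCast, ← Real.rpow_mul hp.le,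
    ← Real.rpow_add hp]
  congr 1
  ring

lemma rpow_exponent' {p : ℝ} (hp : 0 < p) (i : ℕ) :
    p ^ (-(i : ℝ) / 2) = (Real.sqrt p)⁻¹ ^ i := by
  rw [Real.sqrt_eq_rpow, ← Real.rpow_neg hp.le, ← Real.rpow_natCast, ← Real.rpow_mul hp.le]
  congr 1
  ring

lemma card_PIdx (d : ℕ) : Fintype.card (PIdx d) = d := by
  simp [Fintype.card_subtype_compl]

lemma card_le (I : Finset (PIdx d)) : I.card ≤ d := by
  have := Finset.card_le_univ I
  rwa [card_PIdx] at this

lemma mixed_term_le (hT : T.Nonempty) (hs : T = -T)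
    (hM : ∀ t ∈ T, ∑ i, |contr A t i| ≤ M) {p : ℝ} (hp : 0 < p) (I : Finset (PIdx d)) :
    (Real.sqrt p)⁻¹ ^ I.card * chaosNormT A T (sing (blk I)) (sing (blk I)ᶜ) ≤ rhsSum A T p := by
  have hI := card_le I
  have hc : (sing (blk I)ᶜ).card = d - I.card := by
    rw [card_sing, Finset.card_compl, card_blk, Fintype.card_fin]; omega
  have h := chaosNormT_le_sum hT hs hM (isPartitionPair_sing (blk I)) hc (by omega) hp
  rw [Nat.cast_sub hI] at h
  rw [← rpow_exponent' hp, rhsSum]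
  convert h using 3
  ring

lemma det_term_le (hT : T.Nonempty) (hs : T = -T)
    (hM : ∀ t ∈ T, ∑ i, |contr A t i| ≤ M) {p : ℝ} (hp : 0 < p) (I : Finset (PIdx d)) :
    Real.sqrt p * (Real.sqrt p)⁻¹ ^ I.card
      * chaosNormT A T ∅ (insert (blk I) (sing (blk I)ᶜ)) ≤ rhsSum A T p := by
  have hI := card_le I
  have hne : (blk I).Nonempty := ⟨0, Finset.mem_insert_self _ _⟩
  have hc : (insert (blk I) (sing (blk I)ᶜ)).card = d + 1 - I.card := by
    rw [Finset.card_insert_of_notMem (notMem_sing_compl hne), card_sing, Finset.card_compl,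
      card_blk, Fintype.card_fin]
    omega
  have h := chaosNormT_le_sum hT hs hM (isPartitionPair_insert hne) hc (by omega) hp
  rw [Nat.cast_sub (by omega)] at h
  rw [← rpow_exponent hp, rhsSum]
  convert h using 3
  push_cast
  ring

/-- Subadditivity of the mean supremum, for finitely many weighted processes. -/
lemma integral_penSup_sum_le {κ ι τ α : Type*} [Fintype κ] [Fintype ι] [Nonempty τ] [Fintype α]
    (w : α → ℝ) (hw : ∀ a, 0 ≤ w a) {U : α → (κ → ℝ) → τ → ι → ℝ}
    (hc : ∀ a t l, Continuous fun z => U a z t l) {B : ℝ}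
    (hb : ∀ a z t l, |U a z t l| ≤ B * Real.exp (1 * ∑ c, |z c|)) :
    ∫ y, ∫ ω, penSup (fun t l => ∑ a, w a * U a y t l) 0 ω
        ∂(_root_.stdGaussian ι) ∂(_root_.stdGaussian κ)
      ≤ ∑ a, w a * ∫ y, ∫ ω, penSup (U a y) 0 ω ∂(_root_.stdGaussian ι)
        ∂(_root_.stdGaussian κ) := by
  have hc' : ∀ t l, Continuous fun y : κ → ℝ => ∑ a, w a * U a y t l := fun t l =>
    continuous_finsetSum _ fun a _ => continuous_const.mul (hc a t l)
  have hb' : ∀ y t l, |∑ a, w a * U a y t l|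
      ≤ (∑ a, w a * B) * Real.exp (1 * ∑ c, |y c|) := by
    intro y t l
    rw [Finset.sum_mul]
    refine (Finset.abs_sum_le_sum_abs _ _).trans (Finset.sum_le_sum fun a _ => ?_)
    rw [abs_mul, abs_of_nonneg (hw a), mul_assoc]
    exact mul_le_mul_of_nonneg_left (hb a y t l) (hw a)
  have hi' : Integrable (fun y => ∫ ω, penSup (fun t l => ∑ a, w a * U a y t l) 0 ω
      ∂(_root_.stdGaussian ι)) (_root_.stdGaussian κ) := by
    have h := integrable_penSup_swap (U := fun y t l => ∑ a, w a * U a y t l) hc' hb'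
    exact h.integral_prod_left
  have hi : ∀ a, Integrable (fun y => ∫ ω, penSup (U a y) 0 ω ∂(_root_.stdGaussian ι))
      (_root_.stdGaussian κ) := by
    intro a
    have h := integrable_penSup_swap (hc a) (hb a)
    exact h.integral_prod_left
  have h0 : ∀ a y, Integrable (fun ω => w a * penSup (U a y) 0 ω) (_root_.stdGaussian ι) :=
    fun a y => (integrable_penSup_zero (hb a y)).const_mul (w a)
  have hR : ∑ a, w a * ∫ y, ∫ ω, penSup (U a y) 0 ω ∂(_root_.stdGaussian ι)
        ∂(_root_.stdGaussian κ)
      = ∫ y, ∑ a, w a * ∫ ω, penSup (U a y) 0 ω ∂(_root_.stdGaussian ι)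
        ∂(_root_.stdGaussian κ) := by
    rw [integral_finsetSum _ fun a _ => (hi a).const_mul (w a)]
    exact Finset.sum_congr rfl fun a _ => (integral_const_mul _ _).symm
  rw [hR]
  refine integral_mono hi' (integrable_finsetSum _ fun a _ => (hi a).const_mul (w a)) fun y => ?_
  have h1 : ∑ a, w a * ∫ ω, penSup (U a y) 0 ω ∂(_root_.stdGaussian ι)
      = ∫ ω, ∑ a, w a * penSup (U a y) 0 ω ∂(_root_.stdGaussian ι) := by
    rw [integral_finsetSum _ fun a _ => h0 a y]
    exact Finset.sum_congr rfl fun a _ => (integral_const_mul _ _).symm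
  simp only
  rw [h1]
  refine integral_mono (integrable_penSup_zero (hb' y))
    (integrable_finsetSum _ fun a _ => h0 a y) fun ω => ?_
  exact penSup_add_le Finset.univ w (fun a _ => hw a) (fun a => U a y) _
    (fun a t l => hb a y t l) ω

/-- The mean supremum after smoothing splits into mixed norms. -/
lemma integral_penSup_expand_le (hT : T.Nonempty) (hs : T = -T)
    (hM : ∀ t ∈ T, ∑ i, |contr A t i| ≤ M) {x : PIdx d × Fin n → ℝ}
    (hx : ∀ k, ∑ l, x (k, l) ^ 2 ≤ 1) {s : ℝ} (hs0 : 0 ≤ s) :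
    ∫ y, ∫ ω, penSup (fun (t : T) l => uvec A (fun c => s * y c + x c) t l) 0 ω
        ∂(_root_.stdGaussian (Fin n)) ∂(_root_.stdGaussian (PIdx d × Fin n))
      ≤ ∑ I : Finset (PIdx d),
        s ^ I.card * chaosNormT A T (sing (blk I)) (sing (blk I)ᶜ) := by
  have : Nonempty T := hT.to_subtype
  have hc : ∀ I (t : T) l, Continuous fun y => uvec A (mix I x y) t l :=
    fun I t l => (continuous_uvec A t l).comp (continuous_mix I x)
  have hb : ∀ I y (t : T) l, |uvec A (mix I x y) t l|
      ≤ M * Real.exp (∑ c, |x c|) * Real.exp (1 * ∑ c, |y c|) :=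
    fun I y t l => abs_uvec_mix_le A (hM t t.2) I x y l
  have h := integral_penSup_sum_le (fun I : Finset (PIdx d) => s ^ I.card)
    (fun _ => pow_nonneg hs0 _) hc hb
  simp only [← uvec_expand] at h
  refine h.trans (Finset.sum_le_sum fun I _ => ?_)
  have h2 := integral_penSup_mix_le hT hs hM hx I
  exact mul_le_mul_of_nonneg_left h2 (pow_nonneg hs0 _)

lemma integrable_uvec_mix_sq {t : Fin m → ℝ} (hM : ∑ i, |contr A t i| ≤ M)
    (I : Finset (PIdx d)) (x : PIdx d × Fin n → ℝ) (l : Fin n) :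
    Integrable (fun y => uvec A (mix I x y) t l ^ 2) (_root_.stdGaussian (PIdx d × Fin n)) := by
  have hc : Continuous fun y => uvec A (mix I x y) t l :=
    (continuous_uvec A t l).comp (continuous_mix I x)
  refine integrable_of_exp_bound (hc.pow 2).measurable ((M * Real.exp (∑ c, |x c|)) ^ 2) 2
    fun y => ?_
  rw [abs_pow]
  refine (pow_le_pow_left₀ (abs_nonneg _) (abs_uvec_mix_le A hM I x y l) 2).trans (le_of_eq ?_)
  rw [mul_pow, ← Real.exp_nat_mul]
  congr 2
  push_cast
  ring

/-- The second moment after smoothing splits into squared deterministic norms. -/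
lemma integral_sum_uvec_expand_sq_le (hT : T.Nonempty) (hs : T = -T)
    (hM : ∀ t ∈ T, ∑ i, |contr A t i| ≤ M) {x : PIdx d × Fin n → ℝ}
    (hx : ∀ k, ∑ l, x (k, l) ^ 2 ≤ 1) (s : ℝ) {t : Fin m → ℝ} (ht : t ∈ T) :
    ∫ y, ∑ l, uvec A (fun c => s * y c + x c) t l ^ 2 ∂(_root_.stdGaussian (PIdx d × Fin n))
      ≤ 2 ^ d * ∑ I : Finset (PIdx d),
        (s ^ I.card * chaosNormT A T ∅ (insert (blk I) (sing (blk I)ᶜ))) ^ 2 := by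
  have hi : ∀ I l, Integrable (fun y => uvec A (mix I x y) t l ^ 2)
      (_root_.stdGaussian (PIdx d × Fin n)) := fun I l => integrable_uvec_mix_sq (hM t ht) I x l
  have hcard : ((Finset.univ : Finset (Finset (PIdx d))).card : ℝ) = 2 ^ d := by
    rw [Finset.card_univ, Fintype.card_finset, card_PIdx]; push_cast; rfl
  have hsum : Integrable (fun y => ∑ I : Finset (PIdx d), (2 ^ d * (s ^ I.card) ^ 2) *
      ∑ l, uvec A (mix I x y) t l ^ 2) (_root_.stdGaussian (PIdx d × Fin n)) :=
    integrable_finsetSum _ fun I _ => (integrable_finsetSum _ fun l _ => hi I l).const_mul _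
  refine (integral_mono_of_nonneg
    (Filter.Eventually.of_forall fun y => Finset.sum_nonneg fun _ _ => sq_nonneg _) hsum
    (Filter.Eventually.of_forall fun y => ?_)).trans ?_
  · change ∑ l, uvec A (fun c => s * y c + x c) t l ^ 2 ≤ ∑ I : Finset (PIdx d),
      (2 ^ d * (s ^ I.card) ^ 2) * ∑ l, uvec A (mix I x y) t l ^ 2
    simp only [Finset.mul_sum]
    rw [Finset.sum_comm]
    refine Finset.sum_le_sum fun l _ => ?_
    rw [uvec_expand]
    refine sq_sum_le_card_mul_sum_sq.trans (le_of_eq ?_)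
    rw [hcard, Finset.mul_sum]
    exact Finset.sum_congr rfl fun I _ => by ring
  · rw [integral_finsetSum _ fun I _ => (integrable_finsetSum _ fun l _ => hi I l).const_mul _,
      Finset.mul_sum]
    refine Finset.sum_le_sum fun I _ => ?_
    rw [integral_const_mul, integral_finsetSum _ fun l _ => hi I l, integral_sum_uvec_mix_sq,
      mul_pow, mul_assoc]
    refine mul_le_mul_of_nonneg_left (mul_le_mul_of_nonneg_left ?_ (sq_nonneg _)) (by positivity)
    exact (Real.sqrt_le_left (chaosNormT_nonneg hT hs hM _ _)).1
      (sqrt_sum_sq_le_chaos hT hs hM hx I ht)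

lemma exists_contr_bound (A : (Fin (d + 1) → Fin n) → Fin m → ℝ) (hT : Bornology.IsBounded T) :
    ∃ M, 0 ≤ M ∧ ∀ t ∈ T, ∑ i, |contr A t i| ≤ M := by
  obtain ⟨R, hR0, hR⟩ := hT.exists_pos_norm_le
  refine ⟨∑ i, ∑ j, |A i j| * R, by positivity, fun t ht => Finset.sum_le_sum fun i _ => ?_⟩
  refine (Finset.abs_sum_le_sum_abs _ _).trans (Finset.sum_le_sum fun j _ => ?_)
  rw [abs_mul]
  exact mul_le_mul_of_nonneg_left ((norm_le_pi_norm t j).trans (hR t ht)) (abs_nonneg _)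

lemma continuous_uvec_smul (A : (Fin (d + 1) → Fin n) → Fin m → ℝ) (s : ℝ) (t : Fin m → ℝ)
    (l : Fin n) : Continuous fun z : PIdx d × Fin n → ℝ => uvec A (fun c => s * z c) t l := by
  have h0 : Continuous fun (z : PIdx d × Fin n → ℝ) (c : PIdx d × Fin n) => s * z c :=
    continuous_pi fun c => continuous_const.mul (continuous_apply c)
  have h := (continuous_uvec A t l).comp h0
  exact h

lemma abs_uvec_smul_le {t : Fin m → ℝ} (hM : ∑ i, |contr A t i| ≤ M) {s : ℝ} (hs : 0 ≤ s)
    (z : PIdx d × Fin n → ℝ) (l : Fin n) :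
    |uvec A (fun c => s * z c) t l| ≤ M * Real.exp (s * ∑ c, |z c|) := by
  have h := abs_uvec_le A hM (fun c => s * z c) l
  simpa only [abs_mul, abs_of_nonneg hs, Finset.mul_sum] using h

/-- The smoothing inequality for the process of the theorem: blocks are perturbed by Gaussians of
variance `1 / p`, at entropic cost `d * p / 2`. -/
lemma integral_le_of_radius (hd : 1 ≤ d) (hT : T.Nonempty) (hs : T = -T) (hM0 : 0 ≤ M)
    (hM : ∀ t ∈ T, ∑ i, |contr A t i| ≤ M) {p : ℝ} (hp : 0 < p) {r : ℝ} (hr : 0 < r) :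
    (∫ ω : Fin n → ℝ, sSup { s : ℝ | ∃ x : PIdx d → Fin n → ℝ, ∃ t ∈ T,
            (∀ k, ∑ j, x k j ^ 2 ≤ 1) ∧
            s = ∑ i : Fin (d + 1) → Fin n, ∑ j : Fin m,
              ω (i 0) * (∏ k : PIdx d, x k (i k.1)) * A i j * t j }
          ∂ _root_.stdGaussian (Fin n))
      ≤ 2 * r * (4 ^ d * (rhsSum A T p ^ 2 / p)) + 2 ^ d * rhsSum A T p + d * p / (2 * r) := by
  have : Nonempty T := hT.to_subtype
  set S := rhsSum A T p with hS
  set q := Real.sqrt p with hq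
  have hq0 : 0 < q := Real.sqrt_pos.2 hp
  have hq2 : q ^ 2 = p := Real.sq_sqrt hp.le
  have hcard : ((Finset.univ : Finset (Finset (PIdx d))).card : ℝ) = 2 ^ d := by
    rw [Finset.card_univ, Fintype.card_finset, card_PIdx]; push_cast; rfl
  have hshift : ∀ x y : PIdx d × Fin n → ℝ,
      (fun c => q⁻¹ * (y + fun c => q * x c) c) = fun c => q⁻¹ * y c + x c := by
    intro x y
    ext1 c
    simp only [Pi.add_apply]
    field_simp
  refine smoothing_bound (fun z (t : T) l => uvec A (fun c => q⁻¹ * z c) t l) ?_ M q⁻¹ hM0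
    (inv_nonneg.2 hq0.le) ?_
    {v | ∃ x : PIdx d × Fin n → ℝ, (∀ k, ∑ l, x (k, l) ^ 2 ≤ 1) ∧ v = fun c => q * x c}
    (d * p) (4 ^ d * (S ^ 2 / p)) (2 ^ d * S) ?_ ?_ ?_ ?_ r hr _ ?_ ?_
  · exact fun t l => continuous_uvec_smul A q⁻¹ t l
  · exact fun z t l => abs_uvec_smul_le (hM t t.2) (inv_nonneg.2 hq0.le) z l
  · rintro v ⟨x, hx, rfl⟩
    simp only [mul_pow, hq2, ← Finset.mul_sum, Fintype.sum_prod_type]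
    rw [mul_comm]
    refine mul_le_mul_of_nonneg_right ((Finset.sum_le_sum fun k _ => hx k).trans ?_) hp.le
    simp
  · intro v _ t l
    exact integral_uvec_shift A q⁻¹ v t l
  · rintro v ⟨x, hx, rfl⟩ t
    simp only [hshift]
    refine (integral_sum_uvec_expand_sq_le hT hs hM hx q⁻¹ t.2).trans ?_
    have h1 : ∀ I : Finset (PIdx d),
        (q⁻¹ ^ I.card * chaosNormT A T ∅ (insert (blk I) (sing (blk I)ᶜ))) ^ 2 ≤ S ^ 2 / p := by
      intro I
      have h2 := det_term_le hT hs hM hp I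
      rw [le_div_iff₀ hp, ← hq2, ← mul_pow]
      have h3 : 0 ≤ chaosNormT A T ∅ (insert (blk I) (sing (blk I)ᶜ)) :=
        chaosNormT_nonneg hT hs hM _ _
      refine pow_le_pow_left₀ (by positivity) (le_trans (le_of_eq ?_) h2) 2
      ring
    have h4 := Finset.sum_le_card_nsmul Finset.univ _ _ fun I _ => h1 I
    rw [nsmul_eq_mul, hcard] at h4
    refine (mul_le_mul_of_nonneg_left h4 (by positivity)).trans (le_of_eq ?_)
    rw [← mul_assoc, ← mul_pow]
    norm_num
  · rintro v ⟨x, hx, rfl⟩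
    simp only [hshift]
    refine (integral_penSup_expand_le hT hs hM hx (inv_nonneg.2 hq0.le)).trans ?_
    have h4 := Finset.sum_le_card_nsmul Finset.univ _ _ fun (I : Finset (PIdx d)) _ =>
      mixed_term_le hT hs hM hp I
    rwa [nsmul_eq_mul, hcard] at h4
  · intro ω
    obtain ⟨t, ht⟩ := hT
    refine Real.sSup_nonneg' ⟨0, ⟨fun _ _ => 0, t, ht, by simp, ?_⟩, le_rfl⟩
    simp [zero_pow (show d ≠ 0 by omega)]
  · intro ω B hB
    obtain ⟨t₀, ht₀⟩ := hT
    refine csSup_le ⟨_, ⟨fun _ _ => 0, t₀, ht₀, by simp, rfl⟩⟩ ?_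
    rintro _ ⟨x, t, ht, hx, rfl⟩
    refine le_trans (le_of_eq ?_)
      (hB (fun c => q * x c.1 c.2) ⟨fun c => x c.1 c.2, hx, rfl⟩ ⟨t, ht⟩)
    have h1 : (fun c : PIdx d × Fin n => q⁻¹ * (q * x c.1 c.2)) = fun c => x c.1 c.2 := by
      ext1 c
      field_simp
    simp only [h1, inner_uvec, contr, Finset.mul_sum]
    exact Finset.sum_congr rfl fun i _ => Finset.sum_congr rfl fun j _ => by ring

end Final

/- Here the chaos is of order `d+1`: the paper's `d` equals `d+1 ≥ 2` below. -/
theorem gaussian_process_product_sup_bound (d : ℕ) (hd : 1 ≤ d) :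
    ∃ C : ℝ, 0 < C ∧
      ∀ (n m : ℕ) (A : (Fin (d + 1) → Fin n) → Fin m → ℝ)
        (T : Set (Fin m → ℝ)), T.Nonempty → Bornology.IsBounded T → T = -T →
        ∀ p : ℝ, 1 ≤ p →
        (∫ ω : Fin n → ℝ, sSup { s : ℝ | ∃ x : PIdx d → Fin n → ℝ, ∃ t ∈ T,
            (∀ k, ∑ j, x k j ^ 2 ≤ 1) ∧
            s = ∑ i : Fin (d + 1) → Fin n, ∑ j : Fin m,
              ω (i 0) * (∏ k : PIdx d, x k (i k.1)) * A i j * t j }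
          ∂ stdGaussian (Fin n))
        ≤ C * ∑ k ∈ Finset.range (d + 2),
            p ^ (((k : ℝ) + 1 - (d + 1)) / 2) * sNorm A T k := by
  refine ⟨2 * 4 ^ d + d / 2 + 2 ^ d, by positivity, fun n m A T hT hbdd hsymm p hp1 => ?_⟩
  obtain ⟨M, hM0, hM⟩ := exists_contr_bound A hbdd
  have hp : 0 < p := by linarith
  have hS := rhsSum_nonneg hT hsymm hM hp
  change _ ≤ _ * rhsSum A T p
  set S := rhsSum A T p
  -- The optimal radius is `p / S`; the perturbation `ε` covers the case `S = 0`.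
  refine le_of_forall_pos_le_add fun δ hδ => ?_
  set K : ℝ := 2 * 4 ^ d + d / 2 with hK
  have hK0 : 0 < K := by positivity
  set ε := δ / K with hε
  have hε0 : 0 < ε := by positivity
  have hKε : K * ε = δ := by rw [hε]; field_simp
  have hSε : 0 < S + ε := by positivity
  refine (integral_le_of_radius hd hT hsymm hM0 hM hp (r := p / (S + ε)) (by positivity)).trans ?_
  have h1 : 2 * (p / (S + ε)) * (4 ^ d * (S ^ 2 / p)) ≤ 2 * 4 ^ d * (S + ε) := by
    have h2 : 2 * (p / (S + ε)) * (4 ^ d * (S ^ 2 / p)) = 2 * 4 ^ d * (S ^ 2 / (S + ε)) := by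
      field_simp
    rw [h2]
    refine mul_le_mul_of_nonneg_left ?_ (by positivity)
    rw [div_le_iff₀ hSε]
    nlinarith
  have h3 : d * p / (2 * (p / (S + ε))) = d / 2 * (S + ε) := by
    field_simp
  rw [h3]
  calc _ ≤ 2 * 4 ^ d * (S + ε) + 2 ^ d * S + d / 2 * (S + ε) := by gcongr
    _ = (K + 2 ^ d) * S + K * ε := by rw [hK]; ring
    _ = _ := by rw [hKε]
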